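/- arXiv:2208.04576 — 3 statements merged into one kernel-verified Lean document; each statement's English description precedes it below -/
import Mathlib

section
/- Let φ be a real analytic ℤ-periodic function satisfying condition (H) for an integer b ≥ 2 and γ ∈ (0,1). Then there exist ℓ₀ ∈ ℕ and ε₀ > 0 such that for Lebesgue-a.e. x ∈ [0,1] the following holds: for every integer ℓ ≥ ℓ₀ there is an infinite set Q_{x,ℓ} ⊆ ℤ₊ such that for every n ∈ Q_{x,ℓ} with n̂ > ℓ, every word w ∈ Λ^ℓ, and all distinct words j, i ∈ Λ^{n̂−ℓ}, one has |S(x, jw) − S(x, iw)| > ε₀^{n̂}. -/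
/-! The set `Q` can be taken to contain all large `n`. For a.e. `x`, once `m` is large, any two
words of length `m` that still have `ℓ₀` letters after their first difference give sums more than `ε₀ ^ m`
apart; since `hat n → ∞`, this applies with `m = hat n`.

The reason is transversality. For sequences `i`, `j` with different first letters,
`S(·, i) - S(·, j)` is not identically zero by (H), and its derivatives obey the factorial bounds
`C R ^ k k!` inherited from the periodic analytic function `φ` (`factorial_bound`); hence at every
point some derivative is nonzero (`transversality`, through `flat_global`). Sublevel sets of a
function with a large `k`-th derivative are small (`sublevel_measure`), and compactness of the space
of triples `(x, i, j)` makes this uniform, also for long finite words (`uniform_sublevel`).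

For words of length `m` with a common prefix `u`, the difference of the sums at `x` is `γ ^ |u|`
times a difference of the above kind evaluated at the point `u(x)`, which costs at most a factor `γ ^ m`
in the size and `b ^ m` in the measure (`diverge_sublevel`). There are only `b ^ (2 m)` pairs of
words, so for small `ε₀` the exceptional sets have summable measure and the Borel–Cantelli lemma
applies (`ae_eventually_separated`). -/


open MeasureTheory Set Filter
open scoped ENNReal NNReal Topology

namespace Skew

noncomputable section

variable (b : ℕ) (γ : ℝ) (φ : ℝ → ℝ)

/-- `j₁ + j₂ b + ⋯ + jₙ b^{n-1}`, the integer part determined by the first `n`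
digits of the sequence `j`. -/
def sval (j : ℕ → Fin b) (n : ℕ) : ℕ := ∑ k ∈ Finset.range n, (j k).val * b ^ k

/-- `S(x,j) = Σ_{n≥1} γ^{n-1} φ((x + j₁ + j₂ b + ⋯ + jₙ b^{n-1})/bⁿ)` for an infinite
sequence `j ∈ Σ = Λ^{ℤ₊}`. -/
def S (x : ℝ) (j : ℕ → Fin b) : ℝ :=
  ∑' n : ℕ, γ ^ n * φ ((x + sval b j (n + 1)) / (b : ℝ) ^ (n + 1))

/-- value of a finite word: first letter has weight `b^0`. -/
def lval : List (Fin b) → ℕ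
  | [] => 0
  | a :: w => a.val + b * lval w

/-- `S(x,w)` for a finite word `w ∈ Λ^#`. -/
def Sfin (x : ℝ) (w : List (Fin b)) : ℝ :=
  ∑ n ∈ Finset.range w.length, γ ^ n * φ ((x + lval b (w.take (n + 1))) / (b : ℝ) ^ (n + 1))

/-- concatenation of a finite word with an infinite sequence. -/
def cat (w : List (Fin b)) (j : ℕ → Fin b) : ℕ → Fin b :=
  fun n => if h : n < w.length then w.get ⟨n, h⟩ else j (n - w.length)

/-- `w(x) = (x + w₁ + w₂ b + ⋯ + wₙ b^{n-1})/bⁿ`. -/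
def pt (w : List (Fin b)) (x : ℝ) : ℝ := (x + lval b w) / (b : ℝ) ^ w.length

/-- the `b`-adic interval `I_w = [w(0), w(0) + b^{-|w|})`. -/
def Iword (w : List (Fin b)) : Set ℝ :=
  Ico (pt b w 0) (pt b w 0 + ((b : ℝ) ^ w.length)⁻¹)

/-- value of a word given as a function `Fin n → Fin b`. -/
def fval {n : ℕ} (w : Fin n → Fin b) : ℕ := ∑ k : Fin n, (w k).val * b ^ (k : ℕ)

/-- `w(x)` for a word given as a function `Fin n → Fin b`. -/
def fpt {n : ℕ} (w : Fin n → Fin b) (x : ℝ) : ℝ := (x + fval b w) / (b : ℝ) ^ n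

/-- `ν` is the Bernoulli product measure `ν^{ℤ₊}` of uniform measures on `Λ = Fin b`:
a probability measure giving each cylinder of length `n` measure `b^{-n}`.  (These
conditions determine the measure uniquely.) -/
def IsBernoulli (ν : Measure (ℕ → Fin b)) : Prop :=
  IsProbabilityMeasure ν ∧
    ∀ (n : ℕ) (w : Fin n → Fin b), ν {j | ∀ k : Fin n, j k = w k} = ((b : ℝ≥0∞) ^ n)⁻¹

/-- the measure `m_x`, pushforward of `ν^{ℤ₊}` under `j ↦ S(x,j)`. -/
def mMeas (ν : Measure (ℕ → Fin b)) (x : ℝ) : Measure ℝ := ν.map (S b γ φ x)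

/-- the SRB measure `ω`: pushforward of `Leb|_{[0,1)} × ν^{ℤ₊}` under `(x,j) ↦ (x, S(x,j))`. -/
def srb (ν : Measure (ℕ → Fin b)) : Measure (ℝ × ℝ) :=
  ((volume.restrict (Ico (0 : ℝ) 1)).prod ν).map fun p => (p.1, S b γ φ p.1 p.2)

/-- the attractor `F^φ_{b,γ}`, closure of `{(x, S(x,j)) : x ∈ [0,1), j ∈ Σ}`. -/
def attractor : Set (ℝ × ℝ) :=
  closure {p | ∃ x ∈ Ico (0 : ℝ) 1, ∃ j : ℕ → Fin b, p = (x, S b γ φ x j)}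

/-- condition (H). -/
def CondH : Prop :=
  ∀ i j : ℕ → Fin b, i ≠ j → ∃ x ∈ Icc (0 : ℝ) 1, S b γ φ x i ≠ S b γ φ x j

/-- condition (H*). -/
def CondHstar : Prop :=
  ∀ i j : ℕ → Fin b, ∀ x ∈ Icc (0 : ℝ) 1, S b γ φ x i = S b γ φ x j

/-- a measure is exact dimensional with dimension `β`. -/
def IsExactDim {X : Type*} [MetricSpace X] [MeasurableSpace X] (μ : Measure X) (β : ℝ) : Prop :=
  ∀ᵐ z ∂μ, Tendsto (fun r : ℝ => Real.log (μ (Metric.closedBall z r)).toReal / Real.log r)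
    (nhdsWithin 0 (Ioi 0)) (nhds β)

/-- the `b`-adic interval of level `n` with index `j`. -/
def badicI (n : ℕ) (j : ℤ) : Set ℝ := Ico ((j : ℝ) / (b : ℝ) ^ n) ((j + 1 : ℝ) / (b : ℝ) ^ n)

/-- the entropy `H(μ, L_n)` (in base-`b` logarithm). -/
def entropy (μ : Measure ℝ) (n : ℕ) : ℝ :=
  (∑' j : ℤ, Real.negMulLog (μ (badicI b n j)).toReal) / Real.log b

/-- the `b`-adic interval of level `n` containing `x`. -/
def badicAt (n : ℕ) (x : ℝ) : Set ℝ := badicI b n ⌊x * (b : ℝ) ^ n⌋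

/-- the component measure `μ_{x,n} = μ(· | L_n(x))`. -/
def component (μ : Measure ℝ) (n : ℕ) (x : ℝ) : Measure ℝ :=
  (μ (badicAt b n x))⁻¹ • μ.restrict (badicAt b n x)

/-- `μ` is `(h,δ,m)`-entropy porous from scale `n₁` to `n₂`. -/
def EntPorous (μ : Measure ℝ) (h δ : ℝ) (m n₁ n₂ : ℕ) : Prop :=
  (1 / (n₂ - n₁ + 1 : ℝ)) *
    ∑ i ∈ Finset.Icc n₁ n₂,
      (μ {x | (1 / m : ℝ) * entropy b (component b μ i x) (i + m) < h + δ}).toReal > 1 - δ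

/-! ### Factorial bounds on the derivatives of a periodic analytic function -/

/-- Real Cauchy estimates. If `φ` has a power series `p` at `x₀` of radius larger than `2s`, then at
`x` with `|x - x₀| < s` it has the re-expanded series `p.changeOrigin (x - x₀)`, whose `k`-th
coefficient is at most `s⁻ᵏ ∑ₙ ‖pₙ‖ (2s)ⁿ`. -/
lemma local_factorial_bound {φ : ℝ → ℝ} {x₀ : ℝ} (h : AnalyticAt ℝ φ x₀) :
    ∃ t ∈ 𝓝 x₀, ∃ C R : ℝ, 0 ≤ C ∧ 0 ≤ R ∧
      ∀ x ∈ t, ∀ k : ℕ, |iteratedDeriv k φ x| ≤ C * R ^ k * k.factorial := by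
  obtain ⟨p, r, hp⟩ := h
  obtain ⟨s, hs0, hsr⟩ : ∃ s : ℝ≥0, 0 < s ∧ ((s : ℝ≥0∞) + s < r) := by
    obtain ⟨q, hq0, hq⟩ := ENNReal.lt_iff_exists_nnreal_btwn.1 hp.r_pos
    refine ⟨q / 2, by simpa using hq0, ?_⟩
    rw [← ENNReal.coe_add, add_halves]
    exact hq
  have hsp : (s : ℝ≥0∞) + s < p.radius := hsr.trans_le hp.r_le
  have hsum := p.changeOriginSeries_summable_aux₁ hsp
  refine ⟨Metric.ball x₀ s, Metric.ball_mem_nhds _ (by simpa using hs0),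
    (∑' i : (Σ k l : ℕ, { s : Finset (Fin (k + l)) // s.card = l }),
      ‖p (i.1 + i.2.1)‖₊ * s ^ i.2.1 * s ^ i.1 : ℝ≥0), (s : ℝ)⁻¹, by positivity, by positivity, ?_⟩
  intro x hx k
  have hy : (‖x - x₀‖₊ : ℝ≥0∞) < s := by
    rw [Metric.mem_ball, dist_eq_norm] at hx
    exact_mod_cast hx
  have hyr : (‖x - x₀‖₊ : ℝ≥0∞) < r := hy.trans_le (le_self_add.trans hsr.le)
  have hco := hp.changeOrigin hyr
  rw [add_sub_cancel] at hco
  have h1 := hco.factorial_smul 1 k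
  rw [← iteratedDeriv_eq_iteratedFDeriv] at h1
  rw [← h1, nsmul_eq_mul, abs_mul, Nat.abs_cast, mul_comm]
  gcongr
  have h2 : ‖p.changeOrigin (x - x₀) k‖₊ * s ^ k ≤
      ∑' i : (Σ k l : ℕ, { s : Finset (Fin (k + l)) // s.card = l }),
      ‖p (i.1 + i.2.1)‖₊ * s ^ i.2.1 * s ^ i.1 := by
    refine le_trans ?_ ((NNReal.summable_sigma.1 hsum).2.le_tsum k (fun _ _ => zero_le) |>.trans_eq
      (hsum.tsum_sigma' (NNReal.summable_sigma.1 hsum).1).symm)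
    simp only [NNReal.tsum_mul_right]
    gcongr
    refine (p.nnnorm_changeOrigin_le k (hyr.trans_le hp.r_le)).trans ?_
    refine Summable.tsum_le_tsum (fun i => ?_)
      (p.changeOriginSeries_summable_aux₂ (hyr.trans_le hp.r_le) k)
      (p.changeOriginSeries_summable_aux₂ (lt_of_le_of_lt le_self_add hsp) k)
    gcongr
    exact_mod_cast hy.le
  have h3 : ‖(p.changeOrigin (x - x₀) k) fun _ => (1 : ℝ)‖ ≤ ‖p.changeOrigin (x - x₀) k‖ := by
    simpa only [norm_one, Finset.prod_const_one, mul_one] using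
      (p.changeOrigin (x - x₀) k).le_opNorm (fun _ => (1 : ℝ))
  rw [← Real.norm_eq_abs]
  refine h3.trans ?_
  rw [inv_pow, ← div_eq_mul_inv, le_div_iff₀ (by positivity)]
  exact_mod_cast h2

/-- By compactness of a period, the local estimates hold with uniform constants. -/
lemma factorial_bound {φ : ℝ → ℝ} (hper : ∀ x : ℝ, φ (x + 1) = φ x)
    (hanal : ∀ x : ℝ, AnalyticAt ℝ φ x) :
    ∃ C R : ℝ, 0 ≤ C ∧ 0 ≤ R ∧
      ∀ x (k : ℕ), |iteratedDeriv k φ x| ≤ C * R ^ k * k.factorial := by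
  obtain ⟨C, R, hC, hR, h⟩ : ∃ C R : ℝ, 0 ≤ C ∧ 0 ≤ R ∧
      ∀ x ∈ Icc (0 : ℝ) 1, ∀ k : ℕ, |iteratedDeriv k φ x| ≤ C * R ^ k * k.factorial := by
    refine isCompact_Icc.induction_on ⟨0, 0, le_rfl, le_rfl, by simp⟩ ?_ ?_ ?_
    · rintro s t hst ⟨C, R, hC, hR, h⟩
      exact ⟨C, R, hC, hR, fun x hx => h x (hst hx)⟩
    · rintro s t ⟨C, R, hC, hR, h⟩ ⟨C', R', hC', hR', h'⟩
      refine ⟨max C C', max R R', by positivity, by positivity, ?_⟩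
      rintro x (hx | hx) k
      · refine (h x hx k).trans ?_
        gcongr <;> exact le_max_left _ _
      · refine (h' x hx k).trans ?_
        gcongr <;> exact le_max_right _ _
    · intro x _
      obtain ⟨t, ht, C, R, hC, hR, h⟩ := local_factorial_bound (hanal x)
      exact ⟨t, mem_nhdsWithin_of_mem_nhds ht, C, R, hC, hR, h⟩
  refine ⟨C, R, hC, hR, fun x k => ?_⟩
  have hp : Function.Periodic (iteratedDeriv k φ) 1 := by
    intro y
    have h1 := congrFun (iteratedDeriv_comp_add_const k φ 1) y
    simp only [hper] at h1
    exact h1.symm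
  obtain ⟨y, hy, hxy⟩ := hp.exists_mem_Ico₀ one_pos x
  rw [hxy]
  exact h y (Ico_subset_Icc_self hy) k

/-! ### Towers of derivatives with factorial growth

A smooth function is handled as a sequence `d : ℕ → ℝ → ℝ` in which `d (k + 1)` is the derivative
of `d k`; the function itself is `d 0`. -/

lemma chain_iteratedDeriv {d : ℕ → ℝ → ℝ} (hd : ∀ k x, HasDerivAt (d k) (d (k + 1) x) x) (k : ℕ) :
    iteratedDeriv k (d 0) = d k := by
  induction k with
  | zero => simp
  | succ k ih =>
    rw [iteratedDeriv_succ, ih]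
    exact funext fun x => (hd k x).deriv

lemma chain_contDiff {d : ℕ → ℝ → ℝ} (hd : ∀ k x, HasDerivAt (d k) (d (k + 1) x) x) (n : ℕ) :
    ContDiff ℝ n (d 0) := by
  refine contDiff_of_differentiable_iteratedDeriv fun m _ => ?_
  rw [chain_iteratedDeriv hd]
  exact fun x => (hd m x).differentiableAt

/-- Under factorial bounds the Lagrange remainder tends to `0` close to `x₀`, so a function that is
flat at `x₀` vanishes there. -/
lemma flat_local {d : ℕ → ℝ → ℝ} (hd : ∀ k x, HasDerivAt (d k) (d (k + 1) x) x) {C R : ℝ}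
    (hC : 0 ≤ C) (hR : 0 ≤ R) (hb : ∀ k x, |d k x| ≤ C * R ^ k * k.factorial)
    {x₀ : ℝ} (h0 : ∀ k, d k x₀ = 0) {x : ℝ} (hx : R * |x - x₀| ≤ 1 / 2) : d 0 x = 0 := by
  rcases eq_or_ne x₀ x with rfl | hne
  · exact h0 0
  have key : ∀ n : ℕ, |d 0 x| ≤ C * (1 / 2) ^ (n + 1) := by
    intro n
    obtain ⟨y, -, hy⟩ := taylor_mean_remainder_lagrange_iteratedDeriv (n := n) hne
      (by exact_mod_cast (chain_contDiff hd (n + 1)).contDiffOn)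
    have hT : taylorWithinEval (d 0) n (uIcc x₀ x) x₀ x = 0 := by
      rw [taylor_within_apply]
      refine Finset.sum_eq_zero fun k _ => ?_
      rw [iteratedDerivWithin_eq_iteratedDeriv (uniqueDiffOn_uIcc hne)
        (chain_contDiff hd k).contDiffAt left_mem_uIcc, chain_iteratedDeriv hd, h0, smul_zero]
    rw [hT, sub_zero, chain_iteratedDeriv hd] at hy
    rw [hy, abs_div, abs_mul, abs_pow, Nat.abs_cast, div_le_iff₀ (by positivity)]
    calc |d (n + 1) y| * |x - x₀| ^ (n + 1)
        ≤ (C * R ^ (n + 1) * (n + 1).factorial) * |x - x₀| ^ (n + 1) := by gcongr; exact hb _ _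
      _ = C * (R * |x - x₀|) ^ (n + 1) * (n + 1).factorial := by ring
      _ ≤ _ := by gcongr
  have hlim : Tendsto (fun n : ℕ => C * (1 / 2 : ℝ) ^ (n + 1)) atTop (𝓝 (C * 0)) :=
    ((tendsto_pow_atTop_nhds_zero_of_lt_one (by norm_num) (by norm_num)).comp
      (tendsto_add_atTop_nat 1)).const_mul C
  rw [mul_zero] at hlim
  exact abs_eq_zero.1 (le_antisymm (ge_of_tendsto' hlim key) (abs_nonneg _))

/-- Identity theorem: the set of points where all derivatives vanish is closed, and open by
`flat_local`. -/
lemma flat_global {d : ℕ → ℝ → ℝ} (hd : ∀ k x, HasDerivAt (d k) (d (k + 1) x) x) {C R : ℝ}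
    (hC : 0 ≤ C) (hR : 0 ≤ R) (hb : ∀ k x, |d k x| ≤ C * R ^ k * k.factorial)
    {x₀ : ℝ} (h0 : ∀ k, d k x₀ = 0) (x : ℝ) : d 0 x = 0 := by
  have hcl : IsClosed {x | ∀ k, d k x = 0} := by
    simp only [ofPred_forall]
    exact isClosed_iInter fun k => isClosed_eq
      (continuous_iff_continuousAt.2 fun x => (hd k x).continuousAt) continuous_const
  have hop : IsOpen {x | ∀ k, d k x = 0} := by
    rw [Metric.isOpen_iff]
    intro y hy
    refine ⟨1 / (2 * (R + 1)), by positivity, fun z hz => ?_⟩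
    have hev : d 0 =ᶠ[𝓝 z] fun _ => 0 := by
      filter_upwards [Metric.isOpen_ball.mem_nhds hz] with u hu
      refine flat_local hd hC hR hb hy ?_
      rw [Metric.mem_ball, Real.dist_eq, lt_div_iff₀ (by positivity)] at hu
      nlinarith [abs_nonneg (u - y)]
    intro k
    rw [← chain_iteratedDeriv hd k, hev.iteratedDeriv_eq k]
    simp
  have := IsClopen.eq_univ ⟨hcl, hop⟩ ⟨x₀, h0⟩
  have hx : x ∈ {x | ∀ k, d k x = 0} := this ▸ mem_univ x
  exact hx 0

/-! ### Sublevel sets of functions with a large derivative -/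

/-- If a function is at most `ε` in size at `2 ^ k` points with gaps at least `η`, then its `k`-th
derivative is at most `(2 / η) ^ k * ε` somewhere. The mean value theorem on the disjoint pairs
`(x₀, x₁), (x₂, x₃), …` gives `2 ^ (k - 1)` points, again with gaps at least `η`, where the
derivative is at most `2 ε / η`. -/
lemma exists_deriv_small {d : ℕ → ℝ → ℝ} (hd : ∀ k x, HasDerivAt (d k) (d (k + 1) x) x)
    {I : Set ℝ} (hI : I.OrdConnected) {η : ℝ} (hη : 0 < η) (k : ℕ) :
    ∀ (l : ℕ) (ε : ℝ) (x : ℕ → ℝ), (∀ i < 2 ^ k, x i ∈ I ∧ |d l (x i)| ≤ ε) →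
      (∀ i, i + 1 < 2 ^ k → x i + η ≤ x (i + 1)) →
      ∃ y ∈ I, |d (l + k) y| ≤ (2 / η) ^ k * ε := by
  induction k with
  | zero =>
    intro l ε x h1 _
    exact ⟨x 0, (h1 0 (by simp)).1, by simpa using (h1 0 (by simp)).2⟩
  | succ k ih =>
    intro l ε x h1 h2
    have hmv : ∀ i, ∃ y, i < 2 ^ k → x (2 * i) ≤ y ∧ y ≤ x (2 * i + 1) ∧
        |d (l + 1) y| ≤ 2 / η * ε := by
      intro i
      by_cases hi : i < 2 ^ k
      swap
      · exact ⟨0, fun h => absurd h hi⟩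
      have hgap := h2 (2 * i) (by rw [pow_succ]; omega)
      obtain ⟨y, hy, hy'⟩ := exists_hasDerivAt_eq_slope (d l) (d (l + 1))
        (a := x (2 * i)) (b := x (2 * i + 1)) (by linarith)
        (fun z _ => (hd l z).continuousAt.continuousWithinAt) (fun z _ => hd l z)
      refine ⟨y, fun _ => ⟨hy.1.le, hy.2.le, ?_⟩⟩
      have e1 := (h1 (2 * i) (by rw [pow_succ]; omega)).2
      have e2 := (h1 (2 * i + 1) (by rw [pow_succ]; omega)).2
      have hε : 0 ≤ ε := (abs_nonneg _).trans e1
      rw [hy', abs_div, div_mul_eq_mul_div]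
      refine div_le_div₀ (by positivity) ?_ hη ?_
      · exact (abs_sub _ _).trans (by linarith)
      · rw [abs_of_pos (by linarith)]; linarith
    choose y hy using hmv
    have hyI : ∀ i < 2 ^ k, y i ∈ I ∧ |d (l + 1) (y i)| ≤ 2 / η * ε := by
      intro i hi
      have := hy i hi
      exact ⟨hI.out (h1 (2 * i) (by rw [pow_succ]; omega)).1
        (h1 (2 * i + 1) (by rw [pow_succ]; omega)).1 ⟨this.1, this.2.1⟩, this.2.2⟩
    have hygap : ∀ i, i + 1 < 2 ^ k → y i + η ≤ y (i + 1) := by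
      intro i hi
      have a1 := hy i (by omega)
      have a2 := hy (i + 1) hi
      have := h2 (2 * i + 1) (by rw [pow_succ]; omega)
      rw [show 2 * (i + 1) = 2 * i + 1 + 1 by ring] at a2
      linarith
    obtain ⟨z, hz, hz'⟩ := ih (l + 1) (2 / η * ε) y hyI hygap
    refine ⟨z, hz, ?_⟩
    rw [show l + (k + 1) = l + 1 + k by ring]
    exact hz'.trans_eq (by ring)

/-- A set of measure larger than `2 n η` contains `n + 1` points with gaps at least `η`: choose a
point within `η` of the infimum, and remove everything below that point plus `η`. No measurability
is needed. -/
lemma exists_separated {η : ℝ} (hη : 0 < η) (n : ℕ) :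
    ∀ E : Set ℝ, Bornology.IsBounded E → ENNReal.ofReal (2 * n * η) < volume E →
      ∃ x : ℕ → ℝ, (∀ i < n + 1, x i ∈ E) ∧ ∀ i, i + 1 < n + 1 → x i + η ≤ x (i + 1) := by
  induction n with
  | zero =>
    intro E _ hE
    have : E.Nonempty := by
      rw [nonempty_iff_ne_empty]
      rintro rfl
      simp at hE
    obtain ⟨a, ha⟩ := this
    exact ⟨fun _ => a, fun _ _ => ha, fun i hi => by omega⟩
  | succ n ih =>
    intro E hEb hE
    have hne : E.Nonempty := by
      rw [nonempty_iff_ne_empty]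
      rintro rfl
      simp at hE
    obtain ⟨a, ha, haη⟩ := Real.lt_sInf_add_pos hne hη
    have hsub : E ⊆ Icc (sInf E) (sInf E + 2 * η) ∪ (E ∩ Ici (a + η)) := by
      intro z hz
      rcases le_or_gt (a + η) z with h | h
      · exact Or.inr ⟨hz, h⟩
      · exact Or.inl ⟨csInf_le hEb.bddBelow hz, by linarith⟩
    have hvol : ENNReal.ofReal (2 * n * η) < volume (E ∩ Ici (a + η)) := by
      by_contra hcon
      push Not at hcon
      refine absurd hE (not_lt.2 ?_)
      refine (measure_mono hsub).trans ((measure_union_le _ _).trans ?_)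
      rw [Real.volume_Icc]
      refine (add_le_add le_rfl hcon).trans ?_
      rw [← ENNReal.ofReal_add (by linarith) (by positivity)]
      refine ENNReal.ofReal_le_ofReal ?_
      push_cast
      linarith
    obtain ⟨x, hx1, hx2⟩ := ih _ (hEb.subset inter_subset_left) hvol
    refine ⟨fun i => Nat.casesOn i a x, ?_, ?_⟩
    · rintro (_ | i) hi
      · exact ha
      · exact (hx1 i (by omega)).1
    · rintro (_ | i) hi
      · exact (hx1 0 (by omega)).2
      · exact hx2 i (by omega)

/-- Van der Corput sublevel estimate. -/
lemma sublevel_measure {d : ℕ → ℝ → ℝ} (hd : ∀ k x, HasDerivAt (d k) (d (k + 1) x) x)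
    {I : Set ℝ} (hI : I.OrdConnected) (hIb : Bornology.IsBounded I) {c η : ℝ} (hc : 0 < c)
    (hη : 0 < η) (k : ℕ) (hk : ∀ y ∈ I, c < |d k y|) :
    volume {y | y ∈ I ∧ |d 0 y| ≤ c * (1 / 2) ^ k * η ^ k} ≤ ENNReal.ofReal (2 * 2 ^ k * η) := by
  by_contra hcon
  push Not at hcon
  obtain ⟨x, hx1, hx2⟩ := exists_separated hη (2 ^ k) _ (hIb.subset (sep_subset _ _))
    (by exact_mod_cast hcon)
  obtain ⟨y, hy, hy'⟩ := exists_deriv_small hd hI hη k 0 _ x (fun i hi => hx1 i (by omega))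
    (fun i hi => hx2 i (by omega))
  rw [zero_add] at hy'
  have h1 : (2 / η) ^ k * (c * (1 / 2) ^ k * η ^ k) = c := by
    rw [div_pow, one_div, inv_pow]; field_simp
  rw [h1] at hy'
  exact absurd (hk y hy) (not_lt.2 hy')

/-! ### Uniform transversality for words with different first letters -/

/-- The `k`-th derivative in `x` of the `n`-th term (counted from `0`) of the series `S(x, j)`. -/
def dTerm (k n : ℕ) (x : ℝ) (j : ℕ → Fin b) : ℝ :=
  γ ^ n * ((((b : ℝ) ^ (n + 1))⁻¹) ^ k *
    iteratedDeriv k φ ((x + sval b j (n + 1)) / (b : ℝ) ^ (n + 1)))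

/-- The `k`-th derivative in `x` of the sum of the first `L` terms of `S(x, j)`. Finite words are
treated as infinite sequences cut off at `L`, so that they range over a compact space. -/
def dPart (k L : ℕ) (x : ℝ) (j : ℕ → Fin b) : ℝ :=
  ∑ n ∈ Finset.range L, dTerm b γ φ k n x j

/-- The `k`-th derivative in `x` of `S(x, j)`, as a series. -/
def dFull (k : ℕ) (x : ℝ) (j : ℕ → Fin b) : ℝ := ∑' n, dTerm b γ φ k n x j

variable {b γ φ}

lemma analytic_hasDerivAt (hanal : ∀ x : ℝ, AnalyticAt ℝ φ x) (k : ℕ) (x : ℝ) :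
    HasDerivAt (iteratedDeriv k φ) (iteratedDeriv (k + 1) φ x) x := by
  have h : ContDiff ℝ (k + 1 : ℕ) φ :=
    contDiff_iff_contDiffAt.2 fun x => (hanal x).contDiffAt
  rw [iteratedDeriv_succ]
  exact (h.differentiable_iteratedDeriv k (by exact_mod_cast Nat.lt_succ_self k) x).hasDerivAt

lemma term_hasDerivAt (hanal : ∀ x : ℝ, AnalyticAt ℝ φ x) (k n : ℕ) (j : ℕ → Fin b) (x : ℝ) :
    HasDerivAt (fun y => dTerm b γ φ k n y j) (dTerm b γ φ (k + 1) n x j) x := by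
  unfold dTerm
  have h1 : HasDerivAt (fun y : ℝ => (y + sval b j (n + 1)) / (b : ℝ) ^ (n + 1))
      (1 / (b : ℝ) ^ (n + 1)) x := ((hasDerivAt_id x).add_const _).div_const _
  have h2 := ((analytic_hasDerivAt hanal k _).comp x h1).const_mul
    (((b : ℝ) ^ (n + 1))⁻¹ ^ k) |>.const_mul (γ ^ n)
  convert! h2 using 1
  rw [pow_succ, one_div]
  ring

lemma term_bound (hb : 2 ≤ b) (hγ : γ ∈ Ioo (0 : ℝ) 1) {C R : ℝ}
    (hφ : ∀ x (k : ℕ), |iteratedDeriv k φ x| ≤ C * R ^ k * k.factorial)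
    (k n : ℕ) (x : ℝ) (j : ℕ → Fin b) :
    ‖dTerm b γ φ k n x j‖ ≤ γ ^ n * (C * R ^ k * k.factorial) := by
  have hγ0 := hγ.1
  have hb1 : (1 : ℝ) ≤ b := by exact_mod_cast (by omega : 1 ≤ b)
  rw [dTerm, norm_mul, norm_mul, Real.norm_of_nonneg (by positivity : 0 ≤ γ ^ n),
    Real.norm_of_nonneg (by positivity : 0 ≤ ((b : ℝ) ^ (n + 1))⁻¹ ^ k)]
  refine mul_le_mul_of_nonneg_left ?_ (by positivity)
  calc ((b : ℝ) ^ (n + 1))⁻¹ ^ k * ‖iteratedDeriv k φ ((x + sval b j (n + 1)) / (b : ℝ) ^ (n + 1))‖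
      ≤ 1 * ‖iteratedDeriv k φ ((x + sval b j (n + 1)) / (b : ℝ) ^ (n + 1))‖ := by
        gcongr
        exact pow_le_one₀ (by positivity) (inv_le_one_of_one_le₀ (one_le_pow₀ hb1))
    _ ≤ _ := by rw [one_mul]; exact hφ _ _

lemma summable_bound (hγ : γ ∈ Ioo (0 : ℝ) 1) (M : ℝ) : Summable fun n : ℕ => γ ^ n * M :=
  (summable_geometric_of_lt_one hγ.1.le hγ.2).mul_right M

lemma term_continuous (hanal : ∀ x : ℝ, AnalyticAt ℝ φ x) (k n : ℕ) :
    Continuous fun p : ℝ × (ℕ → Fin b) => dTerm b γ φ k n p.1 p.2 := by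
  have h1 : Continuous (iteratedDeriv k φ) :=
    continuous_iff_continuousAt.2 fun x => (analytic_hasDerivAt hanal k x).continuousAt
  have h2 : Continuous fun p : ℝ × (ℕ → Fin b) => (sval b p.2 (n + 1) : ℝ) := by
    unfold sval
    push_cast
    refine continuous_finsetSum _ fun m _ => Continuous.mul ?_ continuous_const
    exact (continuous_of_discreteTopology (f := fun a : Fin b => (a.val : ℝ))).comp
      ((continuous_apply m).comp continuous_snd)
  unfold dTerm
  exact continuous_const.mul (continuous_const.mul
    (h1.comp ((continuous_fst.add h2).div_const _)))

lemma dPart_hasDerivAt (hanal : ∀ x : ℝ, AnalyticAt ℝ φ x) (k L : ℕ) (j : ℕ → Fin b) (x : ℝ) :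
    HasDerivAt (fun y => dPart b γ φ k L y j) (dPart b γ φ (k + 1) L x j) x :=
  HasDerivAt.fun_sum fun n _ => term_hasDerivAt hanal k n j x

/-- For distinct sequences, `S(·, i) - S(·, j)` is nowhere flat: its derivatives satisfy factorial
bounds, so flatness at a point would make it vanish identically, against condition (H). -/
lemma transversality (hb : 2 ≤ b) (hγ : γ ∈ Ioo (0 : ℝ) 1)
    (hper : ∀ x : ℝ, φ (x + 1) = φ x) (hanal : ∀ x : ℝ, AnalyticAt ℝ φ x) (hH : CondH b γ φ)
    (i j : ℕ → Fin b) (hij : i ≠ j) (x : ℝ) :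
    ∃ k, dFull b γ φ k x i - dFull b γ φ k x j ≠ 0 := by
  obtain ⟨C, R, hC, hR, hφ⟩ := factorial_bound hper hanal
  have hsum : ∀ k x (j : ℕ → Fin b), Summable fun n => dTerm b γ φ k n x j := fun k x j =>
    .of_norm_bounded (summable_bound hγ _) fun n => term_bound hb hγ hφ k n x j
  have hd : ∀ (j : ℕ → Fin b) k x, HasDerivAt (fun y => dFull b γ φ k y j)
      (dFull b γ φ (k + 1) x j) x := fun j k x =>
    hasDerivAt_tsum (summable_bound hγ _) (fun n y => term_hasDerivAt hanal k n j y)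
      (fun n y => term_bound hb hγ hφ (k + 1) n y j) (hsum k 0 j) x
  have hbd : ∀ (j : ℕ → Fin b) k x, |dFull b γ φ k x j| ≤
      (1 - γ)⁻¹ * (C * R ^ k * k.factorial) := by
    intro j k x
    exact tsum_of_norm_bounded ((hasSum_geometric_of_lt_one hγ.1.le hγ.2).mul_right _)
      fun n => term_bound hb hγ hφ k n x j
  by_contra! h0
  -- The factorial bounds make flatness at `x` spread to all of `ℝ`, including the point from (H).
  obtain ⟨y, -, hy⟩ := hH i j hij
  have h1γ : 0 < 1 - γ := sub_pos.2 hγ.2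
  have := flat_global (d := fun k x => dFull b γ φ k x i - dFull b γ φ k x j)
    (fun k x => (hd i k x).sub (hd j k x)) (C := 2 * (1 - γ)⁻¹ * C) (R := R)
    (by positivity) hR (fun k x => ?_) h0 y
  · apply hy
    have h2 := sub_eq_zero.1 this
    simpa [dFull, dTerm, S] using h2
  · refine (abs_sub _ _).trans ((add_le_add (hbd i k x) (hbd j k x)).trans_eq ?_)
    ring

/-- For sequences with different first letters, cut off at any large `L`, the set where the two sums
are `c η ^ K`-close has measure `O(η)`, with constants independent of the sequences and of `L`.
The estimate, restricted to a set of triples `(y, i, j)`, is stable under finite unions, so by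
compactness of `{i 0 ≠ j 0}` it suffices to prove it near each triple. There some derivative is
bounded away from `0`, and `sublevel_measure` applies. -/
lemma uniform_sublevel (hb : 2 ≤ b) (hγ : γ ∈ Ioo (0 : ℝ) 1)
    (hper : ∀ x : ℝ, φ (x + 1) = φ x) (hanal : ∀ x : ℝ, AnalyticAt ℝ φ x) (hH : CondH b γ φ) :
    ∃ (K : ℕ) (c C : ℝ) (L₀ : ℕ), 0 < c ∧ c ≤ 1 ∧ 0 ≤ C ∧ ∀ η : ℝ, 0 < η → η ≤ 1 →
      ∀ L, L₀ ≤ L → ∀ i j : ℕ → Fin b, i 0 ≠ j 0 →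
        volume {y | y ∈ Icc (0 : ℝ) 1 ∧
          |dPart b γ φ 0 L y i - dPart b γ φ 0 L y j| ≤ c * η ^ K} ≤ ENNReal.ofReal (C * η) := by
  obtain ⟨A, R, hA, hR, hφ⟩ := factorial_bound hper hanal
  have hcpt : IsCompact (Icc (0 : ℝ) 1 ×ˢ {p : (ℕ → Fin b) × (ℕ → Fin b) | p.1 0 ≠ p.2 0}) := by
    refine isCompact_Icc.prod (IsClosed.isCompact ?_)
    exact (isClosed_discrete {q : Fin b × Fin b | q.1 ≠ q.2}).preimage
      (f := fun p : (ℕ → Fin b) × (ℕ → Fin b) => (p.1 0, p.2 0)) (by fun_prop)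
  obtain ⟨K, c, C, L₀, hc, hc1, hC, h⟩ : ∃ (K : ℕ) (c C : ℝ) (L₀ : ℕ), 0 < c ∧ c ≤ 1 ∧ 0 ≤ C ∧
      ∀ η : ℝ, 0 < η → η ≤ 1 → ∀ L, L₀ ≤ L → ∀ p : (ℕ → Fin b) × (ℕ → Fin b),
        volume {y | (y, p) ∈ (Icc (0 : ℝ) 1 ×ˢ
            {p : (ℕ → Fin b) × (ℕ → Fin b) | p.1 0 ≠ p.2 0}) ∧
          |dPart b γ φ 0 L y p.1 - dPart b γ φ 0 L y p.2| ≤ c * η ^ K} ≤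
          ENNReal.ofReal (C * η) := by
    refine hcpt.induction_on ⟨0, 1, 0, 0, one_pos, le_rfl, le_rfl, by simp⟩ ?_ ?_ ?_
    · rintro s t hst ⟨K, c, C, L₀, hc, hc1, hC, h⟩
      exact ⟨K, c, C, L₀, hc, hc1, hC, fun η h0 h1 L hL p =>
        le_trans (measure_mono (by rintro y ⟨hy, hy'⟩; exact ⟨hst hy, hy'⟩)) (h η h0 h1 L hL p)⟩
    · rintro s t ⟨K, c, C, L₀, hc, hc1, hC, h⟩ ⟨K', c', C', L₀', hc', hc1', hC', h'⟩
      refine ⟨max K K', min c c', C + C', max L₀ L₀', lt_min hc hc', (min_le_left _ _).trans hc1,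
        add_nonneg hC hC', fun η h0 h1 L hL p => ?_⟩
      have e1 : min c c' * η ^ max K K' ≤ c * η ^ K := by
        gcongr ?_ * ?_
        · exact min_le_left _ _
        · exact pow_le_pow_of_le_one h0.le h1 (le_max_left _ _)
      have e2 : min c c' * η ^ max K K' ≤ c' * η ^ K' := by
        gcongr ?_ * ?_
        · exact min_le_right _ _
        · exact pow_le_pow_of_le_one h0.le h1 (le_max_right _ _)
      rw [add_mul, ENNReal.ofReal_add (by positivity) (by positivity)]
      refine le_trans (measure_mono ?_) ((measure_union_le _ _).trans (add_le_add
        (h η h0 h1 L ((le_max_left _ _).trans hL) p)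
        (h' η h0 h1 L ((le_max_right _ _).trans hL) p)))
      rintro y ⟨hy | hy, hy'⟩
      · exact Or.inl ⟨hy, hy'.trans e1⟩
      · exact Or.inr ⟨hy, hy'.trans e2⟩
    · rintro ⟨x, i, j⟩ ⟨-, hij⟩
      have hne : i ≠ j := fun h => hij (by simp [h])
      obtain ⟨k, hk⟩ := transversality hb hγ hper hanal hH i j hne x
      have hcontF : Continuous fun p : ℝ × (ℕ → Fin b) => dFull b γ φ k p.1 p.2 :=
        continuous_tsum (term_continuous hanal k) (summable_bound hγ _)
          (fun n p => term_bound hb hγ hφ k n p.1 p.2)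
      have hcont : Continuous fun q : ℝ × (ℕ → Fin b) × (ℕ → Fin b) =>
          |dFull b γ φ k q.1 q.2.1 - dFull b γ φ k q.1 q.2.2| :=
        ((hcontF.comp (by fun_prop : Continuous fun q : ℝ × (ℕ → Fin b) × (ℕ → Fin b) =>
          (q.1, q.2.1))).sub (hcontF.comp (by fun_prop :
            Continuous fun q : ℝ × (ℕ → Fin b) × (ℕ → Fin b) => (q.1, q.2.2)))).abs
      obtain ⟨c, hc, hc1, hcF⟩ : ∃ c : ℝ, 0 < c ∧ c ≤ 1 ∧
          2 * c < |dFull b γ φ k x i - dFull b γ φ k x j| := by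
        have := abs_pos.2 hk
        refine ⟨min 1 (|dFull b γ φ k x i - dFull b γ φ k x j| / 4), by positivity,
          min_le_left _ _, ?_⟩
        linarith [min_le_right 1 (|dFull b γ φ k x i - dFull b γ φ k x j| / 4)]
      have hev := (hcont.tendsto (x, i, j)).eventually (lt_mem_nhds hcF)
      rw [nhds_prod_eq] at hev
      obtain ⟨U, hU, V, hV, hUV⟩ := Filter.mem_prod_iff.1 hev
      obtain ⟨δ, hδ, hδU⟩ := Metric.mem_nhds_iff.1 hU
      have hunif : ∀ᶠ L in atTop, ∀ p : ℝ × (ℕ → Fin b),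
          dist (dFull b γ φ k p.1 p.2) (dPart b γ φ k L p.1 p.2) < c / 2 :=
        Metric.tendstoUniformly_iff.1 (tendstoUniformly_tsum_nat
          (f := fun n (p : ℝ × (ℕ → Fin b)) => dTerm b γ φ k n p.1 p.2) (summable_bound hγ _)
          (fun n p => term_bound hb hγ hφ k n p.1 p.2)) (c / 2) (by positivity)
      obtain ⟨L₀, hL₀⟩ := eventually_atTop.1 hunif
      -- Slices of `ball x δ ×ˢ V` are intervals or empty, as `sublevel_measure` needs.
      refine ⟨Metric.ball x δ ×ˢ V, mem_nhdsWithin_of_mem_nhds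
        (by rw [nhds_prod_eq]; exact prod_mem_prod (Metric.ball_mem_nhds x hδ) hV),
        k, c * (1 / 2) ^ k, 2 * 2 ^ k, L₀, by positivity,
        mul_le_one₀ hc1 (by positivity) (pow_le_one₀ (by norm_num) (by norm_num)),
        by positivity, fun η h0 _ L hL p => ?_⟩
      by_cases hp : p ∈ V
      · refine le_trans (measure_mono ?_) (sublevel_measure
          (d := fun k y => dPart b γ φ k L y p.1 - dPart b γ φ k L y p.2)
          (fun k y => (dPart_hasDerivAt hanal k L p.1 y).sub (dPart_hasDerivAt hanal k L p.2 y))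
          (I := Metric.ball x δ) (convex_ball x δ).ordConnected Metric.isBounded_ball hc h0 k ?_)
        · rintro y ⟨hy, hy'⟩
          exact ⟨hy.1, hy'⟩
        · intro y hy
          have h1 : 2 * c < |dFull b γ φ k y p.1 - dFull b γ φ k y p.2| :=
            hUV (show (y, p) ∈ U ×ˢ V from ⟨hδU hy, hp⟩)
          have h2 := hL₀ L hL (y, p.1)
          have h3 := hL₀ L hL (y, p.2)
          rw [Real.dist_eq] at h2 h3
          simp only at h2 h3
          rw [abs_lt] at h2 h3
          rcases lt_abs.1 h1 with h | h
          · exact lt_abs.2 (Or.inl (by linarith))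
          · exact lt_abs.2 (Or.inr (by linarith))
      · refine le_of_eq_of_le ?_ zero_le
        convert! measure_empty (μ := (volume : Measure ℝ))
        ext y
        simp [hp]
  refine ⟨K, c, C, L₀, hc, hc1, hC, fun η h0 h1 L hL i j hij => ?_⟩
  refine (measure_mono ?_).trans (h η h0 h1 L hL (i, j))
  rintro y ⟨hy, hy'⟩
  exact ⟨⟨hy, hij⟩, hy'⟩

/-! ### Finite words -/

lemma lval_take (hb : 0 < b) (p : List (Fin b)) (n : ℕ) (hn : n ≤ p.length) :
    lval b (p.take n) = sval b (cat b p fun _ => ⟨0, hb⟩) n := by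
  induction p generalizing n with
  | nil =>
    obtain rfl : n = 0 := by simpa using hn
    simp [lval, sval]
  | cons a p ih =>
    cases n with
    | zero => simp [lval, sval]
    | succ n =>
      have hn' : n ≤ p.length := by simpa using hn
      rw [List.take_succ_cons, lval, ih n hn', sval, sval, Finset.sum_range_succ', Finset.mul_sum,
        add_comm]
      congr 1
      · refine Finset.sum_congr rfl fun k hk => ?_
        have hk' : k < p.length := (Finset.mem_range.1 hk).trans_le hn'
        simp only [cat, hk', List.length_cons, Nat.succ_lt_succ_iff, dif_pos, List.get_eq_getElem,
          List.getElem_cons_succ]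
        ring
      · simp [cat]

lemma Sfin_eq_dPart (hb : 0 < b) (p : List (Fin b)) (x : ℝ) :
    Sfin b γ φ x p = dPart b γ φ 0 p.length x (cat b p fun _ => ⟨0, hb⟩) := by
  refine Finset.sum_congr rfl fun n hn => ?_
  rw [lval_take hb p (n + 1) (Finset.mem_range.1 hn)]
  simp [dTerm]

lemma lval_append (u p : List (Fin b)) :
    lval b (u ++ p) = lval b u + b ^ u.length * lval b p := by
  induction u with
  | nil => simp [lval]
  | cons a u ih => simp only [List.cons_append, lval, ih, List.length_cons]; ring

lemma Sfin_append (hb : 0 < b) (u p : List (Fin b)) (x : ℝ) :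
    Sfin b γ φ x (u ++ p) = Sfin b γ φ x u + γ ^ u.length * Sfin b γ φ (pt b u x) p := by
  have hb' : (b : ℝ) ≠ 0 := by positivity
  rw [Sfin, List.length_append, Finset.sum_range_add, Sfin, Sfin, Finset.mul_sum]
  congr 1
  · refine Finset.sum_congr rfl fun n hn => ?_
    rw [List.take_append_of_le_length (Finset.mem_range.1 hn)]
  · refine Finset.sum_congr rfl fun n hn => ?_
    rw [add_assoc, List.take_length_add_append, lval_append, ← mul_assoc, ← pow_add]
    congr 2
    rw [pt]
    push_cast
    field_simp
    ring

lemma lval_lt (u : List (Fin b)) : lval b u + 1 ≤ b ^ u.length := by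
  induction u with
  | nil => simp [lval]
  | cons a u ih =>
    rw [lval, List.length_cons, pow_succ]
    have := a.isLt
    nlinarith

lemma pt_mem (hb : 0 < b) (u : List (Fin b)) {x : ℝ} (hx : x ∈ Icc (0 : ℝ) 1) :
    pt b u x ∈ Icc (0 : ℝ) 1 := by
  have h : (lval b u + 1 : ℝ) ≤ b ^ u.length := by exact_mod_cast lval_lt u
  have h1 := hx.1
  refine ⟨by unfold pt; positivity, ?_⟩
  rw [pt, div_le_one (by positivity)]
  linarith [hx.2]

lemma volume_preimage_pt (hb : 0 < b) (u : List (Fin b)) (s : Set ℝ) :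
    volume (pt b u ⁻¹' s) = ENNReal.ofReal ((b : ℝ) ^ u.length) * volume s := by
  have hb' : (0 : ℝ) < (b : ℝ) ^ u.length := by positivity
  have : pt b u ⁻¹' s = (fun x => x + (lval b u : ℝ)) ⁻¹'
      ((fun x => ((b : ℝ) ^ u.length)⁻¹ * x) ⁻¹' s) := by
    ext x
    simp [pt, div_eq_inv_mul]
  rw [this, measure_preimage_add_right, Real.volume_preimage_mul_left (inv_ne_zero hb'.ne'),
    inv_inv, abs_of_pos hb']

/-- `p` and `q` have equal length and differ, and at least `L₀` letters follow the first position
where they differ. -/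
def Diverge (L₀ : ℕ) (p q : List (Fin b)) : Prop :=
  ∃ (u : List (Fin b)) (a a' : Fin b) (p' q' : List (Fin b)), a ≠ a' ∧
    p = u ++ a :: p' ∧ q = u ++ a' :: q' ∧ p'.length = q'.length ∧ L₀ ≤ p'.length

lemma diverge_append {w : List (Fin b)} {p q : List (Fin b)} (hlen : p.length = q.length)
    (hpq : p ≠ q) : Diverge w.length (p ++ w) (q ++ w) := by
  induction p generalizing q with
  | nil => exact absurd (List.length_eq_zero_iff.1 hlen.symm).symm hpq
  | cons a p ih =>
    cases q with
    | nil => simp at hlen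
    | cons a' q =>
      have hlen' : p.length = q.length := by simpa using hlen
      by_cases ha : a = a'
      · subst ha
        obtain ⟨u, c, c', p', q', h⟩ := ih hlen' (fun h => hpq (by rw [h]))
        exact ⟨a :: u, c, c', p', q', h.1, by simp [h.2.1], by simp [h.2.2.1], h.2.2.2⟩
      · exact ⟨[], a, a', p ++ w, q ++ w, ha, rfl, rfl, by simp [hlen'], by simp⟩

/-- The sublevel estimate for two words of length `m` with a common prefix `u`. The prefix contracts
the difference by `γ ^ |u| ≥ γ ^ m` and replaces `x` by `pt b u x`; pulling back along this affine
map multiplies measures by `b ^ |u| ≤ b ^ m`. -/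
lemma diverge_sublevel (hb : 2 ≤ b) (hγ : γ ∈ Ioo (0 : ℝ) 1)
    (hper : ∀ x : ℝ, φ (x + 1) = φ x) (hanal : ∀ x : ℝ, AnalyticAt ℝ φ x) (hH : CondH b γ φ) :
    ∃ (K : ℕ) (c C : ℝ) (L₀ : ℕ), 0 < c ∧ c ≤ 1 ∧ 0 ≤ C ∧ ∀ η : ℝ, 0 < η → η ≤ 1 →
      ∀ (m : ℕ) (p q : List (Fin b)), p.length = m → Diverge L₀ p q →
        volume {x | x ∈ Icc (0 : ℝ) 1 ∧
          |Sfin b γ φ x p - Sfin b γ φ x q| ≤ γ ^ m * (c * η ^ K)} ≤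
            ENNReal.ofReal ((b : ℝ) ^ m * (C * η)) := by
  obtain ⟨K, c, C, L₀, hc, hc1, hC, h⟩ := uniform_sublevel hb hγ hper hanal hH
  refine ⟨K, c, C, L₀, hc, hc1, hC, fun η h0 h1 m p q hm hpq => ?_⟩
  obtain ⟨u, a, a', p', q', haa, rfl, rfl, hlen, hL⟩ := hpq
  have hb0 : 0 < b := by omega
  have hb1 : (1 : ℝ) ≤ b := by exact_mod_cast hb0
  have hγ0 := hγ.1
  have hum : u.length ≤ m := by rw [← hm]; simp
  refine le_trans (measure_mono (t := pt b u ⁻¹' {y | y ∈ Icc (0 : ℝ) 1 ∧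
    |dPart b γ φ 0 (p'.length + 1) y (cat b (a :: p') fun _ => ⟨0, hb0⟩) -
      dPart b γ φ 0 (p'.length + 1) y (cat b (a' :: q') fun _ => ⟨0, hb0⟩)| ≤ c * η ^ K}) ?_) ?_
  · rintro x ⟨hx, hx'⟩
    refine ⟨pt_mem hb0 u hx, ?_⟩
    rw [Sfin_append hb0, Sfin_append hb0, add_sub_add_left_eq_sub, ← mul_sub, abs_mul,
      abs_of_pos (pow_pos hγ0 _), Sfin_eq_dPart hb0, Sfin_eq_dPart hb0, List.length_cons,
      List.length_cons, ← hlen] at hx'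
    have h2 : γ ^ m * (c * η ^ K) ≤ γ ^ u.length * (c * η ^ K) :=
      mul_le_mul_of_nonneg_right (pow_le_pow_of_le_one hγ0.le hγ.2.le hum) (by positivity)
    exact le_of_mul_le_mul_left (hx'.trans h2) (pow_pos hγ0 _)
  · rw [volume_preimage_pt hb0, ENNReal.ofReal_mul (by positivity)]
    refine mul_le_mul' (ENNReal.ofReal_le_ofReal (pow_le_pow_right₀ hb1 hum)) ?_
    exact h η h0 h1 _ (by omega) _ _ (by simpa [cat] using haa)

/-- `hat n → ∞`, with the side condition `1 ≤ n` attached. -/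
lemma hat_large {hat : ℕ → ℕ} (hb : 2 ≤ b) (hγ : γ ∈ Ioo (0 : ℝ) 1)
    (hhat : ∀ n : ℕ, 1 ≤ n → γ ^ hat n ≤ ((b : ℝ) ^ n)⁻¹) (M : ℕ) :
    ∀ᶠ n in atTop, 1 ≤ n ∧ M ≤ hat n := by
  have hb1 : (1 : ℝ) < b := by exact_mod_cast (by omega : 1 < b)
  have hlim : Tendsto (fun n : ℕ => ((b : ℝ) ^ n)⁻¹) atTop (𝓝 0) :=
    (tendsto_pow_atTop_atTop_of_one_lt hb1).inv_tendsto_atTop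
  filter_upwards [eventually_ge_atTop 1, hlim.eventually (gt_mem_nhds (pow_pos hγ.1 M))] with n hn h
  refine ⟨hn, ?_⟩
  by_contra! hlt
  have := pow_le_pow_of_le_one hγ.1.le hγ.2.le hlt.le
  linarith [hhat n hn]

/-! ### The Borel–Cantelli argument -/

/-- Take `η = (2 b ^ 3)⁻ᵐ` in `diverge_sublevel`. There are `b ^ (2 m)` pairs of words of length
`m`, each with an exceptional set of measure at most `C b ^ m η`, in total `C 2⁻ᵐ`, which is
summable. -/
lemma ae_eventually_separated (hb : 2 ≤ b) (hγ : γ ∈ Ioo (0 : ℝ) 1)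
    (hper : ∀ x : ℝ, φ (x + 1) = φ x) (hanal : ∀ x : ℝ, AnalyticAt ℝ φ x) (hH : CondH b γ φ) :
    ∃ (ε₀ : ℝ) (L₀ : ℕ), 0 < ε₀ ∧ ∀ᵐ x ∂(volume.restrict (Icc (0 : ℝ) 1)),
      ∀ᶠ m in atTop, ∀ p q : List (Fin b), p.length = m → q.length = m → Diverge L₀ p q →
        ε₀ ^ m < |Sfin b γ φ x p - Sfin b γ φ x q| := by
  obtain ⟨K, c, C, L₀, hc, hc1, hC, h⟩ := diverge_sublevel hb hγ hper hanal hH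
  have hγ0 := hγ.1
  have hb1 : (1 : ℝ) ≤ b := by exact_mod_cast (by omega : 1 ≤ b)
  set η : ℝ := (2 * (b : ℝ) ^ 3)⁻¹ with hη
  have hη0 : 0 < η := by positivity
  have hη1 : η ≤ 1 := inv_le_one_of_one_le₀ (by nlinarith [one_le_pow₀ hb1 (n := 3)])
  refine ⟨γ * (c * η ^ K), L₀, by positivity, ?_⟩
  let bad : ℕ → Set ℝ := fun m => ⋃ f : (Fin m → Fin b) × (Fin m → Fin b),
    {x | x ∈ Icc (0 : ℝ) 1 ∧ Diverge L₀ (List.ofFn f.1) (List.ofFn f.2) ∧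
      |Sfin b γ φ x (List.ofFn f.1) - Sfin b γ φ x (List.ofFn f.2)| ≤ γ ^ m * (c * (η ^ m) ^ K)}
  have hbad : ∀ m, volume (bad m) ≤ ENNReal.ofReal (C * (1 / 2) ^ m) := by
    intro m
    refine (measure_iUnion_fintype_le _ _).trans ?_
    have h1 : ∀ f ∈ (Finset.univ : Finset ((Fin m → Fin b) × (Fin m → Fin b))),
        volume {x | x ∈ Icc (0 : ℝ) 1 ∧ Diverge L₀ (List.ofFn f.1) (List.ofFn f.2) ∧
          |Sfin b γ φ x (List.ofFn f.1) - Sfin b γ φ x (List.ofFn f.2)| ≤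
            γ ^ m * (c * (η ^ m) ^ K)} ≤ ENNReal.ofReal ((b : ℝ) ^ m * (C * η ^ m)) := by
      intro f _
      by_cases hf : Diverge L₀ (List.ofFn f.1) (List.ofFn f.2)
      · refine (measure_mono ?_).trans (h (η ^ m) (by positivity) (pow_le_one₀ hη0.le hη1) m _ _
          List.length_ofFn hf)
        rintro x ⟨hx, -, hx'⟩
        exact ⟨hx, hx'⟩
      · simp [hf]
    refine (Finset.sum_le_card_nsmul _ _ _ h1).trans_eq ?_
    rw [nsmul_eq_mul, ← ENNReal.ofReal_natCast, ← ENNReal.ofReal_mul (by positivity)]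
    congr 1
    simp only [Finset.card_univ, Fintype.card_prod, Fintype.card_fun, Fintype.card_fin]
    push_cast
    rw [hη, inv_pow, mul_pow, one_div, inv_pow]
    field_simp
    ring
  have hsum : ∑' m, volume.restrict (Icc (0 : ℝ) 1) (bad m) ≠ ∞ := by
    refine ne_top_of_le_ne_top (b := ∑' m : ℕ, ENNReal.ofReal (C * (1 / 2) ^ m)) ?_
      (ENNReal.tsum_le_tsum fun m => (Measure.restrict_apply_le _ _).trans (hbad m))
    exact (summable_geometric_two.mul_left C).tsum_ofReal_ne_top
  filter_upwards [ae_eventually_notMem hsum, ae_restrict_mem measurableSet_Icc] with x hx hxI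
  filter_upwards [hx, eventually_ge_atTop 1] with m hm hm1 p q hp hq hpq
  by_contra! hcon
  refine hm (mem_iUnion.2 ⟨(fun i => p.get (i.cast hp.symm), fun i => q.get (i.cast hq.symm)), ?_⟩)
  -- Words of length `m` are indexed by the finite type `Fin m → Fin b`.
  have ep : List.ofFn (fun i : Fin m => p.get (i.cast hp.symm)) = p := by
    subst hp; exact List.ofFn_get p
  have eq : List.ofFn (fun i : Fin m => q.get (i.cast hq.symm)) = q := by
    subst hq; exact List.ofFn_get q
  refine ⟨hxI, ?_⟩
  simp only [ep, eq]
  refine ⟨hpq, hcon.trans ?_⟩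
  rw [mul_pow, mul_pow, ← pow_mul, ← pow_mul, mul_comm K m]
  gcongr
  exact pow_le_of_le_one hc.le hc1 (by omega)

/-- **Exponential separation.** Here `hat n = n̂` is the unique integer with
`γ^n̂ ≤ b^{-n} < γ^{n̂-1}`. -/
theorem exponential_separation (b : ℕ) (hb : 2 ≤ b) (γ : ℝ) (hγ : γ ∈ Ioo (0 : ℝ) 1)
    (φ : ℝ → ℝ) (hper : ∀ x : ℝ, φ (x + 1) = φ x) (hanal : ∀ x : ℝ, AnalyticAt ℝ φ x)
    (hH : CondH b γ φ)
    (hat : ℕ → ℕ)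
    (hhat : ∀ n : ℕ, 1 ≤ n →
      γ ^ hat n ≤ ((b : ℝ) ^ n)⁻¹ ∧ ((b : ℝ) ^ n)⁻¹ < γ ^ (hat n - 1)) :
    ∃ (ℓ₀ : ℕ) (ε₀ : ℝ), 0 < ε₀ ∧
      ∀ᵐ x ∂(volume.restrict (Icc (0 : ℝ) 1)),
        ∀ ℓ : ℕ, ℓ₀ ≤ ℓ →
          ∃ Q : Set ℕ, Q.Infinite ∧ (∀ n ∈ Q, 1 ≤ n) ∧
            ∀ n ∈ Q, ℓ < hat n →
              ∀ w : List (Fin b), w.length = ℓ →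
                ∀ jj ii : List (Fin b), jj.length = hat n - ℓ → ii.length = hat n - ℓ →
                  jj ≠ ii →
                    ε₀ ^ hat n < |Sfin b γ φ x (jj ++ w) - Sfin b γ φ x (ii ++ w)| := by
  obtain ⟨ε₀, L₀, hε, hae⟩ := ae_eventually_separated hb hγ hper hanal hH
  refine ⟨L₀, ε₀, hε, ?_⟩
  filter_upwards [hae] with x hx ℓ hℓ
  obtain ⟨M, hM⟩ := eventually_atTop.1 hx
  refine ⟨{n | 1 ≤ n ∧ M ≤ hat n}, ?_, fun n hn => hn.1, ?_⟩
  · exact Nat.frequently_atTop_iff_infinite.1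
      (hat_large hb hγ (fun n hn => (hhat n hn).1) M).frequently
  · intro n hn hlt w hw jj ii hjj hii hne
    obtain ⟨u, a, a', p', q', h1, h2, h3, h4, h5⟩ :=
      diverge_append (w := w) (hjj.trans hii.symm) hne
    exact hM (hat n) hn.2 _ _ (by simp; omega) (by simp; omega)
      ⟨u, a, a', p', q', h1, h2, h3, h4, by omega⟩

end
end Skew
end

section
/- Let k ∈ ℕ. For every M > 0 and L > 0 there exists a constant C = C(k, M, L) > 0 with the following property. Let J ⊂ ℝ be a compact interval of length at most L and let F be a k-times continuously differentiable function on J with max_{0≤p≤k} sup_{x∈J} |F^{(p)}(x)| ≤ M. Let 0 < d < 1 be such that for every x ∈ J there is p ∈ {0,1,…,k} with |F^{(p)}(x)| > d. Then for every 0 < ρ < (d/2)^{2^k}, the set F^{−1}((−ρ, ρ)) can be covered by at most C/d^k intervals, each of length ≤ 2(ρ/d)^{1/2^k}. -/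
/-!
The proof is by induction on `k`, for a chain of functions `f 0, f 1, …, f k` on `[a, c]` in which
`f (p + 1)` is the derivative of `f p`.

For `k = 0` the set of small values is empty. For the step, cut `[a, c]` into `O(1 / d)` pieces of
length `d / (2M)`. As `f 0` is `M`-Lipschitz, a piece on which `|f 0|` is somewhere below `ρ ≤ d / 2`
has `|f 0| < d` throughout, so there the shifted chain `f 1, f 2, …` satisfies the hypotheses with
`k - 1`. The induction hypothesis with threshold `√(ρ d)` covers `{|f 1| < √(ρ d)}` by
`O(1 / d ^ (k - 1))` intervals of the required length `w = 2 (ρ / d) ^ (1 / 2 ^ k)`. By the mean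
value theorem, two points of `{|f 0| < ρ}` with no point of the cover between them are at distance
at most `2ρ / √(ρ d) ≤ w`, so each gap of the cover costs only one further interval (`cover_gaps`).
-/

open Set

/-- If any two points of `T` whose connecting segment avoids a finite family of intervals of length
`w` are at distance at most `w`, then `T` is covered by those intervals together with one more
interval for each gap of the family. -/
theorem cover_gaps (T : Set ℝ) (s : Finset ℝ) (w : ℝ) (hw : 0 ≤ w)
    (h : ∀ x ∈ T, ∀ y ∈ T, x < y → (∀ z ∈ Icc x y, z ∉ ⋃ t ∈ s, Icc t (t + w)) → y - x ≤ w) :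
    ∃ s' : Finset ℝ, s'.card ≤ 2 * s.card + 1 ∧ T ⊆ ⋃ t ∈ s', Icc t (t + w) := by
  classical
  -- A gap of the family is labelled by the number of left endpoints lying before it.
  let A : ℕ → Set ℝ := fun m =>
    {x | x ∈ T ∧ x ∉ (⋃ t ∈ s, Icc t (t + w)) ∧ (s.filter (· < x)).card = m}
  have key : ∀ m, ∀ x ∈ A m, ∀ y ∈ A m, x - w ≤ y := by
    rintro m y ⟨hyT, hyU, hym⟩ x ⟨hxT, hxU, hxm⟩
    rcases le_or_gt y x with hxy | hxy
    · linarith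
    have hsub : s.filter (· < x) ⊆ s.filter (· < y) := by
      intro t ht
      simp only [Finset.mem_filter] at ht ⊢
      exact ⟨ht.1, ht.2.trans hxy⟩
    have heq := Finset.eq_of_subset_of_card_le hsub (by rw [hxm, hym])
    have := h x hxT y hyT hxy (by
      intro z hz hzU
      simp only [mem_iUnion, mem_Icc, exists_prop, not_exists, not_and, not_le] at hzU hxU hyU hz
      obtain ⟨t, hts, h1, h2⟩ := hzU
      have hty : t < y := by
        rcases lt_or_eq_of_le (h1.trans hz.2) with h3 | h3
        · exact h3
        · have := hyU t hts h3.le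
          linarith
      have htx : t ∈ s.filter (· < x) := by
        rw [heq]; simp [hts, hty]
      have := hxU t hts (Finset.mem_filter.1 htx).2.le
      linarith [hz.1])
    linarith
  refine ⟨s ∪ (Finset.range (s.card + 1)).image (fun m => sInf (A m)), ?_, ?_⟩
  · have h1 := Finset.card_union_le s ((Finset.range (s.card + 1)).image (fun m => sInf (A m)))
    have h2 := Finset.card_image_le (s := Finset.range (s.card + 1)) (f := fun m => sInf (A m))
    rw [Finset.card_range] at h2
    omega
  · intro x hx
    by_cases hxU : x ∈ ⋃ t ∈ s, Icc t (t + w)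
    · simp only [mem_iUnion, exists_prop] at hxU ⊢
      obtain ⟨t, ht, h1⟩ := hxU
      exact ⟨t, Finset.mem_union_left _ ht, h1⟩
    · have hxA : x ∈ A (s.filter (· < x)).card := ⟨hx, hxU, rfl⟩
      simp only [mem_iUnion, exists_prop]
      refine ⟨sInf (A (s.filter (· < x)).card), Finset.mem_union_right _
        (Finset.mem_image_of_mem _ (Finset.mem_range.2
          (Nat.lt_succ_of_le (Finset.card_filter_le _ _)))), ?_, ?_⟩
      · exact csInf_le ⟨x - w, fun y hy => key _ x hxA y hy⟩ hxA
      · have := le_csInf ⟨x, hxA⟩ (fun y hy => key _ x hxA y hy)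
        linarith

/-- The left side is twice the small-value threshold over the lower bound for the slope, which bounds
the diameter of the small-value set in a gap; the right side is the allowed interval length. -/
theorem two_mul_div_sqrt_le (k : ℕ) (ρ d : ℝ) (hρ : 0 < ρ) (hd : 0 < d) (hρd : ρ ≤ d) :
    2 * ρ / √(ρ * d) ≤ 2 * (ρ / d) ^ (1 / (2 : ℝ) ^ (k + 1)) := by
  have h1 : 2 * ρ / √(ρ * d) = 2 * (ρ / d) ^ (1 / (2 : ℝ)) := by
    rw [← Real.sqrt_eq_rpow, Real.sqrt_mul hρ.le, Real.sqrt_div hρ.le]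
    have := Real.sqrt_pos.2 hρ
    have := Real.sqrt_pos.2 hd
    have h3 := Real.mul_self_sqrt hρ.le
    field_simp
    nlinarith
  rw [h1]
  refine mul_le_mul_of_nonneg_left ?_ (by norm_num)
  apply Real.rpow_le_rpow_of_exponent_ge (by positivity) ((div_le_one hd).2 hρd)
  apply one_div_le_one_div_of_le (by norm_num)
  calc (2 : ℝ) = 2 ^ 1 := by norm_num
    _ ≤ 2 ^ (k + 1) := pow_le_pow_right₀ (by norm_num) (by omega)

/-- The threshold `√(ρ d)` at level `k` yields intervals of the same length as `ρ` at level
`k + 1`. -/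
theorem sqrt_div_rpow (k : ℕ) (ρ d : ℝ) (hρ : 0 < ρ) (hd : 0 < d) :
    (√(ρ * d) / d) ^ (1 / (2 : ℝ) ^ k) = (ρ / d) ^ (1 / (2 : ℝ) ^ (k + 1)) := by
  have h1 : √(ρ * d) / d = (ρ / d) ^ (1 / (2 : ℝ)) := by
    rw [← Real.sqrt_eq_rpow, Real.sqrt_mul hρ.le, Real.sqrt_div hρ.le]
    have := Real.sqrt_pos.2 hd
    have h3 := Real.mul_self_sqrt hd.le
    field_simp
    nlinarith
  rw [h1, ← Real.rpow_mul (by positivity)]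
  congr 1
  rw [pow_succ]
  field_simp

theorem sqrt_threshold_lt (k : ℕ) (ρ d : ℝ) (hρ : 0 < ρ) (hd : 0 < d) (hd1 : d < 1)
    (h : ρ < (d / 2) ^ 2 ^ (k + 1)) : √(ρ * d) < (d / 2) ^ 2 ^ k := by
  rw [Real.sqrt_lt' (by positivity), ← pow_mul, ← pow_succ]
  nlinarith

theorem threshold_le (k : ℕ) (d : ℝ) (hd : 0 < d) (hd1 : d < 1) :
    (d / 2) ^ 2 ^ k ≤ d / 2 := by
  calc (d / 2) ^ 2 ^ k ≤ (d / 2) ^ 1 :=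
        pow_le_pow_of_le_one (by positivity) (by linarith) (Nat.one_le_two_pow)
    _ = d / 2 := pow_one _

/-- The covering statement for a chain `f 0, …, f k` of successive derivatives on `[a, c]`; in this
form it passes to subintervals and to the shifted chain, which the induction needs. -/
theorem cover_chain (M L : ℝ) (hM : 0 < M) (hL : 0 < L) (k : ℕ) :
    ∃ C : ℝ, 0 < C ∧
      ∀ a c : ℝ, a ≤ c → c - a ≤ L → ∀ f : ℕ → ℝ → ℝ,
        (∀ p < k, ∀ x ∈ Icc a c, HasDerivWithinAt (f p) (f (p + 1) x) (Icc a c) x) →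
          (∀ p ≤ k, ∀ x ∈ Icc a c, |f p x| ≤ M) →
          ∀ d : ℝ, 0 < d → d < 1 →
            (∀ x ∈ Icc a c, ∃ p ≤ k, d < |f p x|) →
            ∀ ρ : ℝ, 0 < ρ → ρ < (d / 2) ^ 2 ^ k →
              ∃ s : Finset ℝ, (s.card : ℝ) ≤ C / d ^ k ∧
                {x ∈ Icc a c | |f 0 x| < ρ} ⊆
                  ⋃ t ∈ s, Icc t (t + 2 * (ρ / d) ^ (1 / (2 : ℝ) ^ k)) := by
  classical
  induction k with
  | zero =>
    refine ⟨1, one_pos, fun a c hac hcL f hf hfM d hd hd1 hfd ρ hρ hρd => ⟨∅, by simp, ?_⟩⟩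
    rintro x ⟨hx, hxρ⟩
    obtain ⟨p, hp, hpd⟩ := hfd x hx
    obtain rfl : p = 0 := by omega
    have := threshold_le 0 d hd hd1
    linarith
  | succ k ih =>
    obtain ⟨C, hC, ih⟩ := ih
    refine ⟨(2 * M * L + 1) * (2 * C + 1), by positivity, ?_⟩
    intro a c hac hcL f hf hfM d hd hd1 hfd ρ hρ hρd
    have hρ2 : ρ < d / 2 := hρd.trans_le (threshold_le _ d hd hd1)
    set w := 2 * (ρ / d) ^ (1 / (2 : ℝ) ^ (k + 1)) with hw
    have hw0 : 0 ≤ w := by positivity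
    set h := d / (2 * M) with hh
    have hh0 : 0 < h := by positivity
    have hlip : ∀ x ∈ Icc a c, ∀ y ∈ Icc a c, |f 0 y - f 0 x| ≤ M * |y - x| := by
      intro x hx y hy
      have := (convex_Icc a c).norm_image_sub_le_of_norm_hasDerivWithin_le
        (f := f 0) (f' := f 1) (C := M) (fun z hz => hf 0 (by omega) z hz)
        (fun z hz => hfM 1 (by omega) z hz) hx hy
      simpa using this
    -- On an interval of length `h`, `f 0` varies by at most `d / 2`, so one small value makes it
    -- smaller than `d` throughout.
    have piece : ∀ u v : ℝ, Icc u v ⊆ Icc a c → v - u ≤ h →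
        ∃ s : Finset ℝ, (s.card : ℝ) ≤ 2 * C / d ^ k + 1 ∧
          {x ∈ Icc u v | |f 0 x| < ρ} ⊆ ⋃ t ∈ s, Icc t (t + w) := by
      intro u v huv hvu
      by_cases hne : ∃ x ∈ Icc u v, |f 0 x| < ρ
      swap
      · refine ⟨∅, by simp; positivity, ?_⟩
        rintro x ⟨hx, hxρ⟩
        exact (hne ⟨x, hx, hxρ⟩).elim
      obtain ⟨x₀, hx₀, hx₀ρ⟩ := hne
      have huv' : u ≤ v := hx₀.1.trans hx₀.2
      have hsmall : ∀ y ∈ Icc u v, |f 0 y| < d := by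
        intro y hy
        have h1 := hlip x₀ (huv hx₀) y (huv hy)
        have h2 : |y - x₀| ≤ h := by
          rw [abs_le]; constructor <;> linarith [hy.1, hy.2, hx₀.1, hx₀.2]
        have h3 : M * |y - x₀| ≤ d / 2 := by
          calc M * |y - x₀| ≤ M * h := by gcongr
            _ = d / 2 := by rw [hh]; field_simp
        have h4 := abs_sub_abs_le_abs_sub (f 0 y) (f 0 x₀)
        linarith
      have hua := (huv (left_mem_Icc.2 huv')).1
      have hvc := (huv (right_mem_Icc.2 huv')).2
      obtain ⟨s, hs, hcov⟩ := ih u v huv' (by linarith) (fun p => f (p + 1))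
        (fun p hp x hx => (hf (p + 1) (by omega) x (huv hx)).mono huv)
        (fun p hp x hx => hfM (p + 1) (by omega) x (huv hx)) d hd hd1
        (by
          intro x hx
          obtain ⟨p, hp, hpd⟩ := hfd x (huv hx)
          rcases p with _ | p
          · exact absurd hpd (hsmall x hx).not_gt
          · exact ⟨p, by omega, hpd⟩)
        (√(ρ * d)) (Real.sqrt_pos.2 (by positivity)) (sqrt_threshold_lt k ρ d hρ hd hd1 hρd)
      rw [sqrt_div_rpow k ρ d hρ hd, ← hw] at hcov
      obtain ⟨s', hs', hcov'⟩ := cover_gaps {x ∈ Icc u v | |f 0 x| < ρ} s w hw0 (by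
        rintro x ⟨hx, hxρ⟩ y ⟨hy, hyρ⟩ hxy hz
        have hsub : Icc x y ⊆ Icc u v := Icc_subset_Icc hx.1 hy.2
        obtain ⟨z, hzxy, hzd⟩ := exists_hasDerivAt_eq_slope (f 0) (f 1) hxy
          (fun z hz => ((hf 0 (by omega) z (huv (hsub hz))).mono
            (hsub.trans huv)).continuousWithinAt)
          (fun z hz => ((hf 0 (by omega) z (huv (hsub (Ioo_subset_Icc_self hz)))).mono
            (hsub.trans huv)).hasDerivAt (Icc_mem_nhds hz.1 hz.2))
        have hzI := Ioo_subset_Icc_self hzxy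
        have hbig : √(ρ * d) ≤ |f 1 z| := by
          by_contra! hlt
          exact hz z hzI (hcov ⟨hsub hzI, hlt⟩)
        have hsq : 0 < √(ρ * d) := Real.sqrt_pos.2 (by positivity)
        have hyx : 0 < y - x := by linarith
        have h5 : |f 1 z| * (y - x) = |f 0 y - f 0 x| := by
          rw [hzd, abs_div, abs_of_pos hyx]
          field_simp
        have h6 := abs_sub (f 0 y) (f 0 x)
        refine le_trans ?_ (two_mul_div_sqrt_le k ρ d hρ hd (by linarith))
        rw [le_div_iff₀ hsq]
        nlinarith)
      refine ⟨s', ?_, hcov'⟩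
      have h7 : (s'.card : ℝ) ≤ 2 * s.card + 1 := by exact_mod_cast hs'
      calc (s'.card : ℝ) ≤ 2 * s.card + 1 := h7
        _ ≤ 2 * (C / d ^ k) + 1 := by gcongr
        _ = _ := by ring
    have pieces : ∀ j : ℕ, ∃ s : Finset ℝ, (s.card : ℝ) ≤ 2 * C / d ^ k + 1 ∧
          {x ∈ Icc (a + j * h) (min (a + (j + 1) * h) c) | |f 0 x| < ρ} ⊆
            ⋃ t ∈ s, Icc t (t + w) := by
      intro j
      have hj : 0 ≤ j * h := by positivity
      refine piece _ _ (Icc_subset_Icc (by linarith) (min_le_right _ _)) ?_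
      have := min_le_left (a + (j + 1) * h) c
      linarith
    choose s hs hcov using pieces
    refine ⟨(Finset.range (⌊L / h⌋₊ + 1)).biUnion s, ?_, ?_⟩
    · have h1 : ((((Finset.range (⌊L / h⌋₊ + 1)).biUnion s).card : ℕ) : ℝ) ≤
          ∑ j ∈ Finset.range (⌊L / h⌋₊ + 1), ((s j).card : ℝ) := by
        exact_mod_cast Finset.card_biUnion_le
      have h2 : ∑ j ∈ Finset.range (⌊L / h⌋₊ + 1), ((s j).card : ℝ) ≤
          (⌊L / h⌋₊ + 1) * (2 * C / d ^ k + 1) := by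
        refine (Finset.sum_le_sum (fun j _ => hs j)).trans_eq ?_
        rw [Finset.sum_const, Finset.card_range, nsmul_eq_mul, Nat.cast_add_one]
      have h3 : (⌊L / h⌋₊ : ℝ) ≤ L / h := Nat.floor_le (by positivity)
      have h4 : L / h + 1 ≤ (2 * M * L + 1) / d := by
        rw [hh, le_div_iff₀ hd]
        field_simp
        linarith
      have h5 : 2 * C / d ^ k + 1 ≤ (2 * C + 1) / d ^ k := by
        rw [add_div]
        gcongr
        rw [le_div_iff₀ (by positivity), one_mul]
        exact pow_le_one₀ hd.le hd1.le
      calc _ ≤ _ := h1.trans h2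
        _ ≤ (2 * M * L + 1) / d * ((2 * C + 1) / d ^ k) :=
          mul_le_mul (by linarith) h5 (by positivity) (by positivity)
        _ = _ := by rw [pow_succ]; field_simp
    · rintro x ⟨hx, hxρ⟩
      have hx0 : 0 ≤ (x - a) / h := div_nonneg (by linarith [hx.1]) hh0.le
      have h1 := Nat.floor_le hx0
      have h2 := Nat.lt_floor_add_one ((x - a) / h)
      rw [le_div_iff₀ hh0] at h1
      rw [div_lt_iff₀ hh0] at h2
      have := hcov ⌊(x - a) / h⌋₊
        ⟨⟨by linarith, le_min (by linarith) hx.2⟩, hxρ⟩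
      simp only [mem_iUnion, exists_prop, Finset.mem_biUnion, Finset.mem_range] at this ⊢
      obtain ⟨t, ht, hxt⟩ := this
      refine ⟨t, ⟨_, Nat.lt_succ_of_le (Nat.floor_le_floor ?_), ht⟩, hxt⟩
      gcongr
      linarith [hx.2]

/-- Hochman's lemma on covering small-value sets of smooth functions: if every point of a
compact interval `J` (of length `≤ L`) has some derivative of order `≤ k` larger than `d`
in absolute value, and all derivatives up to order `k` are bounded by `M`, then for every
`0 < ρ < (d/2)^{2^k}` the set `F⁻¹((-ρ,ρ))` is covered by `O_{k,M,L}(1/dᵏ)` intervals of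
length at most `2(ρ/d)^{1/2^k}`. -/
theorem cover_of_small_values (k : ℕ) (M L : ℝ) (hM : 0 < M) (hL : 0 < L) :
    ∃ C : ℝ, 0 < C ∧
      ∀ a c : ℝ, a ≤ c → c - a ≤ L →
        ∀ F : ℝ → ℝ, ContDiffOn ℝ k F (Icc a c) →
          (∀ p ≤ k, ∀ x ∈ Icc a c, |iteratedDerivWithin p F (Icc a c) x| ≤ M) →
          ∀ d : ℝ, 0 < d → d < 1 →
            (∀ x ∈ Icc a c, ∃ p ≤ k, d < |iteratedDerivWithin p F (Icc a c) x|) →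
            ∀ ρ : ℝ, 0 < ρ → ρ < (d / 2) ^ 2 ^ k →
              ∃ (N : ℕ) (cnt : Fin N → ℝ), (N : ℝ) ≤ C / d ^ k ∧
                {x ∈ Icc a c | F x ∈ Ioo (-ρ) ρ} ⊆
                  ⋃ i : Fin N, Icc (cnt i) (cnt i + 2 * (ρ / d) ^ (1 / (2 : ℝ) ^ k)) := by
  obtain ⟨C, hC, H⟩ := cover_chain M L hM hL k
  refine ⟨C + 1, by positivity, ?_⟩
  intro a c hac hcL F hF hFM d hd hd1 hFd ρ hρ hρd
  rcases hac.eq_or_lt with rfl | hac_lt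
  -- Derivatives within a one-point interval are not unique, so this case is separate: a single
  -- interval covers the point.
  · refine ⟨1, fun _ => a, ?_, ?_⟩
    · rw [le_div_iff₀ (by positivity)]
      have := pow_le_one₀ (n := k) hd.le hd1.le
      push_cast
      linarith
    · rintro x ⟨hx, -⟩
      have hw : 0 ≤ 2 * (ρ / d) ^ (1 / (2 : ℝ) ^ k) := by positivity
      simp only [mem_iUnion, mem_Icc]
      exact ⟨0, hx.1, by linarith [hx.2]⟩
  · obtain ⟨s, hs, hcov⟩ := H a c hac hcL (fun p => iteratedDerivWithin p F (Icc a c))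
      (by
        intro p hp x hx
        have h1 := (hF.differentiableOn_iteratedDerivWithin (m := p) (by exact_mod_cast hp)
          (uniqueDiffOn_Icc hac_lt)) x hx
        have h2 := h1.hasDerivWithinAt
        rwa [← iteratedDerivWithin_succ] at h2)
      hFM d hd hd1 hFd ρ hρ hρd
    refine ⟨s.card, fun i => (s.equivFin.symm i : ℝ), hs.trans (by gcongr; linarith), ?_⟩
    rintro x ⟨hx, hxρ⟩
    have := hcov ⟨hx, by simpa [abs_lt] using hxρ⟩
    simp only [mem_iUnion, exists_prop] at this ⊢
    obtain ⟨t, ht, hxt⟩ := this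
    exact ⟨s.equivFin ⟨t, ht⟩, by simpa using hxt⟩
end

section
/- Let b ≥ 2 be an integer, γ ∈ (0,1), and let φ be a real analytic ℤ-periodic function satisfying condition (H). Then there exist a constant ε₁ > 0 and an integer Q₁ ≥ 0 such that for every pair of sequences i, j ∈ Σ with i₁ ≠ j₁ and every x ∈ [0,1], there exists k ∈ {0,1,…,Q₁} with |S^{(k)}(x,i) − S^{(k)}(x,j)| ≥ ε₁. -/
/-! The triples `(i, j, x)` with `i 0 ≠ j 0` and `x ∈ [0,1]` form a compact space on which every
derivative `S⁽ᵏ⁾(x,i) - S⁽ᵏ⁾(x,j)` is continuous, because the series defining `S` may be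
differentiated term by term (`iteratedDeriv_S`, `continuous_iteratedDeriv_S`). It is therefore
enough that at each such triple some derivative is nonzero; a uniform bound follows by covering
the compact space with the open sets where some derivative of order at most `n` exceeds
`1 / (n + 1)`.

If all derivatives vanished at one triple, `S(·,i) - S(·,j)` would be flat at `x`. A periodic
analytic `φ` satisfies `|φ⁽ᵏ⁾| ≤ C Rᵏ k!` on the whole line (`global_cauchy_bound`), and up to a
constant factor so does `S(·,i) - S(·,j)`. Hence Taylor's formula makes the difference vanish on a
neighbourhood of `x` of fixed size, and by connectedness everywhere (`eq_zero_of_flat`), contrary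
to condition (H). -/

open MeasureTheory Set Filter
open scoped ENNReal NNReal Topology

namespace Skew

noncomputable section

variable (b : ℕ) (γ : ℝ) (φ : ℝ → ℝ)

/-! ### Derivative bounds for periodic analytic functions -/

/-- Cauchy-type estimate, locally uniform in the base point: the power series of `f` recentred
at a nearby point `x + y` has coefficients dominated by one convergent series that does not depend
on `y`. -/
lemma local_cauchy_bound {f : ℝ → ℝ} {x : ℝ} (hf : AnalyticAt ℝ f x) :
    ∃ C R : ℝ, 0 < C ∧ 0 < R ∧
      ∀ᶠ y in 𝓝 x, ∀ k : ℕ, |iteratedDeriv k f y| ≤ C * R ^ k * (k.factorial : ℝ) := by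
  obtain ⟨p, r, hp⟩ := hf
  obtain ⟨ρ, hρ0, hρ⟩ := ENNReal.lt_iff_exists_nnreal_btwn.1 hp.r_pos
  have hρ0' : 0 < ρ := by exact_mod_cast hρ0
  set s : ℝ≥0 := ρ / 2 with hs
  have hs0 : 0 < s := by positivity
  have hss : s + s = ρ := by rw [hs]; exact add_halves ρ
  have hsr : ((s : ℝ≥0∞) + s) < r := by rw [← ENNReal.coe_add, hss]; exact hρ
  have hsum := p.changeOriginSeries_summable_aux₁ (hsr.trans_le hp.r_le)
  set M : ℝ≥0 := ∑' s' : Σ k l : ℕ, { t : Finset (Fin (k + l)) // t.card = l },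
      ‖p (s'.1 + s'.2.1)‖₊ * s ^ s'.2.1 * s ^ s'.1 with hM
  have hcoef : ∀ y : ℝ, ‖y‖₊ ≤ s → ∀ k : ℕ, ‖p.changeOrigin y k‖₊ * s ^ k ≤ M := by
    intro y hy k
    have hy' : (‖y‖₊ : ℝ≥0∞) < p.radius := by
      refine lt_of_le_of_lt ?_ (hsr.trans_le hp.r_le)
      exact (ENNReal.coe_le_coe.2 hy).trans le_self_add
    have hs' : (s : ℝ≥0∞) < p.radius :=
      lt_of_le_of_lt le_self_add (hsr.trans_le hp.r_le)
    calc ‖p.changeOrigin y k‖₊ * s ^ k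
        ≤ (∑' q : Σ l : ℕ, { t : Finset (Fin (k + l)) // t.card = l },
            ‖p (k + q.1)‖₊ * ‖y‖₊ ^ q.1) * s ^ k := by
          gcongr; exact p.nnnorm_changeOrigin_le k hy'
      _ ≤ (∑' q : Σ l : ℕ, { t : Finset (Fin (k + l)) // t.card = l },
            ‖p (k + q.1)‖₊ * s ^ q.1) * s ^ k := by
          gcongr
          · exact p.changeOriginSeries_summable_aux₂ hy' k
          · exact p.changeOriginSeries_summable_aux₂ hs' k
      _ = ∑' q : Σ l : ℕ, { t : Finset (Fin (k + l)) // t.card = l },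
            ‖p (k + q.1)‖₊ * s ^ q.1 * s ^ k := by rw [NNReal.tsum_mul_right]
      _ ≤ ∑' k : ℕ, ∑' q : Σ l : ℕ, { t : Finset (Fin (k + l)) // t.card = l },
            ‖p (k + q.1)‖₊ * s ^ q.1 * s ^ k :=
          (NNReal.summable_sigma.1 hsum).2.le_tsum k (fun _ _ => zero_le)
      _ = M := by
          rw [hM, hsum.tsum_sigma' (NNReal.summable_sigma.1 hsum).1]
  refine ⟨M + 1, (s : ℝ)⁻¹, by positivity, by positivity, ?_⟩
  filter_upwards [Metric.closedBall_mem_nhds x (show (0 : ℝ) < s from hs0)] with z hz k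
  have hzs : ‖z - x‖₊ ≤ s := by
    rw [mem_closedBall_iff_norm] at hz
    exact_mod_cast hz
  have hzr : (‖z - x‖₊ : ℝ≥0∞) < r :=
    lt_of_le_of_lt ((ENNReal.coe_le_coe.2 hzs).trans le_self_add) hsr
  have hq := hp.changeOrigin hzr
  rw [add_sub_cancel] at hq
  have h1 := hq.factorial_smul 1 k
  rw [← iteratedDeriv_eq_iteratedFDeriv] at h1
  have h2 : ‖p.changeOrigin (z - x) k (fun _ => (1 : ℝ))‖ ≤ ‖p.changeOrigin (z - x) k‖ := by
    simp
  have h3 : ‖p.changeOrigin (z - x) k‖ * (s : ℝ) ^ k ≤ M := by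
    exact_mod_cast hcoef _ hzs k
  have hsp : (0 : ℝ) < (s : ℝ) ^ k := by positivity
  have h4 : ‖p.changeOrigin (z - x) k‖ ≤ (M + 1) * ((s : ℝ)⁻¹) ^ k := by
    rw [inv_pow, ← div_eq_mul_inv, le_div_iff₀ hsp]
    linarith
  rw [← h1, nsmul_eq_mul, abs_mul, Nat.abs_cast, mul_comm]
  exact mul_le_mul_of_nonneg_right (h2.trans h4) (Nat.cast_nonneg _)

/-- Compactness of one period makes the constants of `local_cauchy_bound` uniform. -/
lemma global_cauchy_bound {f : ℝ → ℝ} (hper : ∀ x : ℝ, f (x + 1) = f x)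
    (hf : ∀ x : ℝ, AnalyticAt ℝ f x) :
    ∃ C R : ℝ, 0 < C ∧ 0 < R ∧
      ∀ y : ℝ, ∀ k : ℕ, |iteratedDeriv k f y| ≤ C * R ^ k * (k.factorial : ℝ) := by
  have hcpt : ∃ C R : ℝ, 0 < C ∧ 0 < R ∧
      ∀ y ∈ Icc (0 : ℝ) 1, ∀ k : ℕ, |iteratedDeriv k f y| ≤ C * R ^ k * (k.factorial : ℝ) := by
    refine isCompact_Icc.induction_on (p := fun s : Set ℝ => ∃ C R : ℝ, 0 < C ∧ 0 < R ∧
      ∀ y ∈ s, ∀ k : ℕ, |iteratedDeriv k f y| ≤ C * R ^ k * (k.factorial : ℝ)) ?_ ?_ ?_ ?_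
    · exact ⟨1, 1, one_pos, one_pos, by simp⟩
    · rintro s t hst ⟨C, R, hC, hR, h⟩
      exact ⟨C, R, hC, hR, fun y hy => h y (hst hy)⟩
    · rintro s t ⟨C, R, hC, hR, h⟩ ⟨C', R', hC', hR', h'⟩
      refine ⟨max C C', max R R', lt_max_of_lt_left hC, lt_max_of_lt_left hR, ?_⟩
      rintro y (hy | hy) k
      · refine (h y hy k).trans ?_
        gcongr
        · exact le_max_left _ _
        · exact le_max_left _ _
      · refine (h' y hy k).trans ?_
        gcongr
        · exact le_max_right _ _
        · exact le_max_right _ _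
    · intro x _
      obtain ⟨C, R, hC, hR, h⟩ := local_cauchy_bound (hf x)
      exact ⟨_, mem_nhdsWithin_of_mem_nhds h, C, R, hC, hR, fun y hy => hy⟩
  obtain ⟨C, R, hC, hR, h⟩ := hcpt
  refine ⟨C, R, hC, hR, fun y k => ?_⟩
  have hp : Function.Periodic (iteratedDeriv k f) 1 := by
    have h1 := iteratedDeriv_comp_add_const k f 1
    simp only [hper] at h1
    exact fun t => (congrFun h1 t).symm
  obtain ⟨z, hz, hyz⟩ := hp.exists_mem_Ico₀ one_pos y
  rw [hyz]
  exact h z ⟨hz.1, hz.2.le⟩ k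

/-! ### Functions that are flat at a point -/

/-- Taylor's formula: all Taylor polynomials at `x` vanish and the remainder of order `n` is at
most `C (R |y - x|) ^ n`, which tends to zero. -/
lemma eq_zero_near_of_flat {f : ℝ → ℝ} (hf : ContDiff ℝ ((⊤ : ℕ∞) : WithTop ℕ∞) f) {C R : ℝ}
    (hR : 0 < R)
    (hb : ∀ y : ℝ, ∀ k : ℕ, |iteratedDeriv k f y| ≤ C * R ^ k * (k.factorial : ℝ))
    {x : ℝ} (hx : ∀ k : ℕ, iteratedDeriv k f x = 0) {y : ℝ} (hy : R * |y - x| < 1) :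
    f y = 0 := by
  rcases eq_or_ne x y with rfl | hxy
  · simpa using hx 0
  have hbound : ∀ n : ℕ, |f y| ≤ C * (R * |y - x|) ^ (n + 1) := by
    intro n
    obtain ⟨z, -, hz⟩ := taylor_mean_remainder_lagrange_iteratedDeriv (n := n) hxy
      ((hf.of_le (by exact_mod_cast le_top)).contDiffOn)
    have hT : taylorWithinEval f n (uIcc x y) x y = 0 := by
      rw [taylor_within_apply]
      refine Finset.sum_eq_zero fun k _ => ?_
      rw [iteratedDerivWithin_eq_iteratedDeriv (uniqueDiffOn_uIcc hxy)
        ((hf.of_le (by exact_mod_cast le_top)).contDiffAt) left_mem_uIcc, hx k, smul_zero]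
    rw [hT, sub_zero] at hz
    rw [hz, abs_div, abs_mul, abs_pow, Nat.abs_cast, div_le_iff₀ (by positivity), mul_pow]
    calc |iteratedDeriv (n + 1) f z| * |y - x| ^ (n + 1)
        ≤ (C * R ^ (n + 1) * ((n + 1).factorial : ℝ)) * |y - x| ^ (n + 1) := by
          gcongr; exact hb z (n + 1)
      _ = _ := by ring
  have hlim : Tendsto (fun n : ℕ => C * (R * |y - x|) ^ (n + 1)) atTop (𝓝 0) := by
    have := (tendsto_pow_atTop_nhds_zero_of_lt_one (by positivity) hy).const_mul C
    rw [mul_zero] at this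
    exact this.comp (tendsto_add_atTop_nat 1)
  have h0 : |f y| ≤ 0 := ge_of_tendsto' hlim hbound
  exact abs_nonpos_iff.1 h0

/-- The set of points where `f` is flat is closed, and it is open by `eq_zero_near_of_flat`. -/
lemma eq_zero_of_flat {f : ℝ → ℝ} (hf : ContDiff ℝ ((⊤ : ℕ∞) : WithTop ℕ∞) f) {C R : ℝ}
    (hR : 0 < R)
    (hb : ∀ y : ℝ, ∀ k : ℕ, |iteratedDeriv k f y| ≤ C * R ^ k * (k.factorial : ℝ))
    {x : ℝ} (hx : ∀ k : ℕ, iteratedDeriv k f x = 0) (y : ℝ) : f y = 0 := by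
  set Z : Set ℝ := {z | ∀ k : ℕ, iteratedDeriv k f z = 0} with hZ
  have hclosed : IsClosed Z := by
    rw [hZ, ofPred_forall]
    refine isClosed_iInter fun k => isClosed_eq ?_ continuous_const
    exact hf.continuous_iteratedDeriv k (by exact_mod_cast le_top)
  have hopen : IsOpen Z := by
    rw [Metric.isOpen_iff]
    intro z hz
    refine ⟨R⁻¹, by positivity, ?_⟩
    have hzero : ∀ w ∈ Metric.ball z R⁻¹, f w = 0 := by
      intro w hw
      refine eq_zero_near_of_flat hf hR hb hz ?_
      rw [Metric.mem_ball, Real.dist_eq] at hw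
      calc R * |w - z| < R * R⁻¹ := by gcongr
        _ = 1 := mul_inv_cancel₀ hR.ne'
    intro w hw k
    have hev : f =ᶠ[𝓝 w] fun _ => (0 : ℝ) :=
      Filter.eventually_of_mem (Metric.isOpen_ball.mem_nhds hw) hzero
    rw [hev.iteratedDeriv_eq k]
    simp
  have huniv : Z = univ := IsClopen.eq_univ ⟨hclosed, hopen⟩ ⟨x, hx⟩
  have hy : y ∈ Z := huniv ▸ mem_univ y
  simpa using hy 0

/-! ### Termwise differentiation of `S` -/

lemma iteratedDeriv_term {φ : ℝ → ℝ} (hφ : ContDiff ℝ ((⊤ : ℕ∞) : WithTop ℕ∞) φ)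
    (c a d : ℝ) (k : ℕ) (x : ℝ) :
    iteratedDeriv k (fun y => c * φ ((y + a) / d)) x
      = c * (d⁻¹ ^ k * iteratedDeriv k φ ((x + a) / d)) := by
  have h1 := congrFun (iteratedDeriv_comp_add_const k (fun z => φ (d⁻¹ * z)) a) x
  have h2 := congrFun (iteratedDeriv_comp_const_mul
    (hφ.of_le (by exact_mod_cast le_top) : ContDiff ℝ k φ) d⁻¹) (x + a)
  simp only [div_eq_inv_mul]
  rw [iteratedDeriv_const_mul_field, h1, h2]

/-- Each differentiation of a term of `S` only gains a factor `b⁻⁽ⁿ⁺¹⁾ ≤ 1`, so the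
differentiated series are still dominated by a geometric series. -/
lemma term_bound_s6 {b : ℕ} (hb : 2 ≤ b) {γ : ℝ} (hγ : 0 < γ) {φ : ℝ → ℝ} {B : ℝ} (k : ℕ)
    (hB : ∀ y, |iteratedDeriv k φ y| ≤ B) (n : ℕ) (y : ℝ) :
    |γ ^ n * (((b : ℝ) ^ (n + 1))⁻¹ ^ k * iteratedDeriv k φ y)| ≤ γ ^ n * B := by
  have hb1 : (1 : ℝ) ≤ b := by exact_mod_cast (by omega : 1 ≤ b)
  have h1 : ((b : ℝ) ^ (n + 1))⁻¹ ^ k ≤ 1 :=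
    pow_le_one₀ (by positivity) (inv_le_one_of_one_le₀ (one_le_pow₀ hb1))
  have h0 : 0 ≤ ((b : ℝ) ^ (n + 1))⁻¹ ^ k := by positivity
  rw [abs_mul, abs_mul, abs_of_pos (pow_pos hγ n), abs_of_nonneg h0]
  refine mul_le_mul_of_nonneg_left ?_ (by positivity)
  calc _ ≤ 1 * |iteratedDeriv k φ y| := by gcongr
    _ ≤ B := by rw [one_mul]; exact hB y

section Series

variable {b : ℕ} {γ : ℝ} {φ : ℝ → ℝ} {B : ℕ → ℝ}

lemma contDiff_S (hb : 2 ≤ b) (hγ : γ ∈ Ioo (0 : ℝ) 1)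
    (hφ : ContDiff ℝ ((⊤ : ℕ∞) : WithTop ℕ∞) φ)
    (hB : ∀ k y, |iteratedDeriv k φ y| ≤ B k) (j : ℕ → Fin b) :
    ContDiff ℝ ((⊤ : ℕ∞) : WithTop ℕ∞) (fun y => S b γ φ y j) := by
  unfold S
  refine contDiff_tsum (v := fun k n => γ ^ n * B k) (fun n => ?_) (fun k _ => ?_) ?_
  · fun_prop
  · exact (summable_geometric_of_lt_one hγ.1.le hγ.2).mul_right _
  · intro k n x _
    rw [norm_iteratedFDeriv_eq_norm_iteratedDeriv, iteratedDeriv_term hφ]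
    exact term_bound_s6 hb hγ.1 k (hB k) n _

lemma iteratedDeriv_S (hb : 2 ≤ b) (hγ : γ ∈ Ioo (0 : ℝ) 1)
    (hφ : ContDiff ℝ ((⊤ : ℕ∞) : WithTop ℕ∞) φ)
    (hB : ∀ k y, |iteratedDeriv k φ y| ≤ B k) (j : ℕ → Fin b) (k : ℕ) (x : ℝ) :
    iteratedDeriv k (fun y => S b γ φ y j) x
      = ∑' n : ℕ, γ ^ n * (((b : ℝ) ^ (n + 1))⁻¹ ^ k *
          iteratedDeriv k φ ((x + sval b j (n + 1)) / (b : ℝ) ^ (n + 1))) := by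
  have hbd : ∀ (k : ℕ) (n : ℕ) (x : ℝ), (k : ℕ∞) ≤ ⊤ → ‖iteratedFDeriv ℝ k
      (fun y => γ ^ n * φ ((y + sval b j (n + 1)) / (b : ℝ) ^ (n + 1))) x‖ ≤ γ ^ n * B k := by
    intro k n x _
    rw [norm_iteratedFDeriv_eq_norm_iteratedDeriv, iteratedDeriv_term hφ]
    exact term_bound_s6 hb hγ.1 k (hB k) n _
  have hsum : ∀ k : ℕ, Summable fun n : ℕ => γ ^ n * B k := fun k =>
    (summable_geometric_of_lt_one hγ.1.le hγ.2).mul_right _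
  unfold S
  rw [iteratedDeriv_eq_iteratedFDeriv, iteratedFDeriv_tsum_apply (N := ⊤)
    (v := fun k n => γ ^ n * B k) (fun n => by fun_prop) (fun k _ => hsum k) hbd le_top,
    ContinuousMultilinearMap.tsum_eval]
  · simp only [← iteratedDeriv_eq_iteratedFDeriv, iteratedDeriv_term hφ]
  · exact Summable.of_norm_bounded (hsum k) fun n => hbd k n x le_top

lemma abs_iteratedDeriv_S_le (hb : 2 ≤ b) (hγ : γ ∈ Ioo (0 : ℝ) 1)
    (hφ : ContDiff ℝ ((⊤ : ℕ∞) : WithTop ℕ∞) φ)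
    (hB : ∀ k y, |iteratedDeriv k φ y| ≤ B k) (j : ℕ → Fin b) (k : ℕ) (x : ℝ) :
    |iteratedDeriv k (fun y => S b γ φ y j) x| ≤ (1 - γ)⁻¹ * B k := by
  rw [iteratedDeriv_S hb hγ hφ hB]
  exact tsum_of_norm_bounded ((hasSum_geometric_of_lt_one hγ.1.le hγ.2).mul_right (B k))
    fun n => (Real.norm_eq_abs _).trans_le (term_bound_s6 hb hγ.1 k (hB k) n _)

/-- Joint continuity in the point and in the digit sequence; each digit `j n` is a continuous
function of `j` with values in a discrete space. -/
lemma continuous_iteratedDeriv_S (hb : 2 ≤ b) (hγ : γ ∈ Ioo (0 : ℝ) 1)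
    (hφ : ContDiff ℝ ((⊤ : ℕ∞) : WithTop ℕ∞) φ)
    (hB : ∀ k y, |iteratedDeriv k φ y| ≤ B k) (k : ℕ) :
    Continuous fun p : (ℕ → Fin b) × ℝ => iteratedDeriv k (fun y => S b γ φ y p.1) p.2 := by
  simp only [iteratedDeriv_S hb hγ hφ hB]
  refine continuous_tsum (u := fun n => γ ^ n * B k) (fun n => ?_)
    ((summable_geometric_of_lt_one hγ.1.le hγ.2).mul_right _)
    fun n p => term_bound_s6 hb hγ.1 k (hB k) n _
  have h1 : Continuous (iteratedDeriv k φ) :=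
    hφ.continuous_iteratedDeriv k (by exact_mod_cast le_top)
  have h2 : Continuous fun p : (ℕ → Fin b) × ℝ => (sval b p.1 (n + 1) : ℝ) := by
    simp only [sval, Nat.cast_sum, Nat.cast_mul]
    refine continuous_finsetSum _ fun m _ => Continuous.mul ?_ continuous_const
    exact (continuous_of_discreteTopology (f := fun d : Fin b => ((d : ℕ) : ℝ))).comp
      ((continuous_apply m).comp continuous_fst)
  fun_prop

end Series

/-- Under condition (H) there are `ε₁ > 0` and `Q₁ ∈ ℕ` such that any two sequences with
different first letters have some derivative (of order `≤ Q₁`) of `x ↦ S(x,·)` differing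
by at least `ε₁` at every `x ∈ [0,1]`. -/
theorem derivative_separation (b : ℕ) (hb : 2 ≤ b) (γ : ℝ) (hγ : γ ∈ Ioo (0 : ℝ) 1)
    (φ : ℝ → ℝ) (hper : ∀ x : ℝ, φ (x + 1) = φ x) (hanal : ∀ x : ℝ, AnalyticAt ℝ φ x)
    (hH : CondH b γ φ) :
    ∃ ε₁ : ℝ, 0 < ε₁ ∧ ∃ Q₁ : ℕ,
      ∀ i j : ℕ → Fin b, i 0 ≠ j 0 → ∀ x ∈ Icc (0 : ℝ) 1,
        ∃ k ≤ Q₁,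
          ε₁ ≤ |iteratedDeriv k (fun y => S b γ φ y i) x -
                 iteratedDeriv k (fun y => S b γ φ y j) x| := by
  obtain ⟨C, R, hC, hR, hbd⟩ := global_cauchy_bound hper hanal
  have hφ : ContDiff ℝ ((⊤ : ℕ∞) : WithTop ℕ∞) φ :=
    contDiff_iff_contDiffAt.2 fun x => (hanal x).contDiffAt
  have hB : ∀ k y, |iteratedDeriv k φ y| ≤ C * R ^ k * (k.factorial : ℝ) := fun k y => hbd y k
  have hcont : ∀ k : ℕ, Continuous fun p : (ℕ → Fin b) × (ℕ → Fin b) × ℝ =>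
      |iteratedDeriv k (fun y => S b γ φ y p.1) p.2.2 -
        iteratedDeriv k (fun y => S b γ φ y p.2.1) p.2.2| := by
    intro k
    have h := continuous_iteratedDeriv_S hb hγ hφ hB k
    exact ((h.comp (continuous_fst.prodMk (continuous_snd.comp continuous_snd))).sub
      (h.comp continuous_snd)).abs
  -- If every derivative of the difference vanishes at one point, the difference is zero.
  have hsep : ∀ i j : ℕ → Fin b, i 0 ≠ j 0 → ∀ x : ℝ, ∃ k : ℕ,
      0 < |iteratedDeriv k (fun y => S b γ φ y i) x -
        iteratedDeriv k (fun y => S b γ φ y j) x| := by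
    intro i j hij x
    by_contra! hcon
    obtain ⟨z, -, hz⟩ := hH i j fun h => hij (congrFun h 0)
    have hi := contDiff_S hb hγ hφ hB i
    have hj := contDiff_S hb hγ hφ hB j
    have hsub : ∀ k y, iteratedDeriv k (fun y => S b γ φ y i - S b γ φ y j) y =
        iteratedDeriv k (fun y => S b γ φ y i) y - iteratedDeriv k (fun y => S b γ φ y j) y :=
      fun k y => iteratedDeriv_fun_sub (hi.of_le (by exact_mod_cast le_top)).contDiffAt
        (hj.of_le (by exact_mod_cast le_top)).contDiffAt
    refine hz (sub_eq_zero.1 (eq_zero_of_flat (f := fun y => S b γ φ y i - S b γ φ y j)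
      (C := 2 * (1 - γ)⁻¹ * C) (R := R) (hi.sub hj) hR ?_ (x := x) ?_ z))
    · intro y k
      rw [hsub]
      refine (abs_sub _ _).trans ?_
      have h1 := abs_iteratedDeriv_S_le hb hγ hφ hB i k y
      have h2 := abs_iteratedDeriv_S_le hb hγ hφ hB j k y
      linarith
    · intro k
      rw [hsub]
      exact abs_nonpos_iff.1 (hcon k)
  -- Compactness: the open sets `U n` increase and cover the compact set `K` of admissible triples.
  set K : Set ((ℕ → Fin b) × (ℕ → Fin b) × ℝ) :=
    {p | p.1 0 ≠ p.2.1 0} ∩ (univ ×ˢ (univ ×ˢ Icc (0 : ℝ) 1)) with hK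
  set U : ℕ → Set ((ℕ → Fin b) × (ℕ → Fin b) × ℝ) := fun n =>
    ⋃ k ∈ Iic n, {p | 1 / ((n : ℝ) + 1) < |iteratedDeriv k (fun y => S b γ φ y p.1) p.2.2 -
        iteratedDeriv k (fun y => S b γ φ y p.2.1) p.2.2|} with hU
  have hKc : IsCompact K := by
    refine (isCompact_univ.prod (isCompact_univ.prod isCompact_Icc)).inter_left ?_
    have : Continuous fun p : (ℕ → Fin b) × (ℕ → Fin b) × ℝ => (p.1 0, p.2.1 0) := by fun_prop
    exact (isClosed_discrete {q : Fin b × Fin b | q.1 ≠ q.2}).preimage this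
  have hUo : ∀ n, IsOpen (U n) := fun n =>
    isOpen_biUnion fun k _ => isOpen_lt continuous_const (hcont k)
  have hcover : K ⊆ ⋃ n, U n := by
    rintro ⟨i, j, x⟩ ⟨hij, -⟩
    obtain ⟨k, hk⟩ := hsep i j hij x
    obtain ⟨m, hm⟩ := exists_nat_one_div_lt hk
    refine mem_iUnion.2 ⟨max k m, mem_iUnion₂.2
      ⟨k, mem_Iic.2 (le_max_left _ _), mem_ofPred.2 (lt_of_le_of_lt ?_ hm)⟩⟩
    exact Nat.one_div_le_one_div (le_max_right _ _)
  have hmono : Monotone U := by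
    intro m n hmn p hp
    obtain ⟨k, hk, hp⟩ := mem_iUnion₂.1 hp
    exact mem_iUnion₂.2 ⟨k, mem_Iic.2 (le_trans (mem_Iic.1 hk) hmn),
      mem_ofPred.2 (lt_of_le_of_lt (Nat.one_div_le_one_div hmn) (mem_ofPred.1 hp))⟩
  obtain ⟨n, hn⟩ := hKc.elim_directed_cover U hUo hcover hmono.directed_le
  refine ⟨1 / ((n : ℝ) + 1), by positivity, n, fun i j hij x hx => ?_⟩
  have hmem : (i, j, x) ∈ K := ⟨hij, mem_univ _, mem_univ _, hx⟩
  obtain ⟨k, hk, hp⟩ := mem_iUnion₂.1 (hn hmem)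
  exact ⟨k, mem_Iic.1 hk, (mem_ofPred.1 hp).le⟩

end
end Skew
end
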